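/- arXiv:2601.21952 — 2 statements merged into one kernel-verified Lean document; each statement's English description precedes it below -/
import Mathlib

section
/- Let p, q ≥ 2 be integers with 4 ≤ p + q ≤ 7, and λ_s = √((q−1)/(p−1)). Then there exists a function v : [0, ∞) → (0, ∞), continuous on [0, ∞) and C² on (0, ∞) with v(0) = 1, v′ extending continuously to 0 with v′(0) = 0, solving the minimal surface ODE v″/(1+v′²) + ((p−1)/r)·v′ − (q−1)/v = 0 on (0, ∞), such that v(r)/r → λ_s and v′(r) → λ_s as r → ∞, and such that the set {r > 0 : v(r) = λ_s·r} is infinite. -/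
open Real Filter

noncomputable section WigglyFix

/-- clamp to `[0, M]`. -/
def wcl (M x : ℝ) : ℝ := max 0 (min x M)

lemma wcl_nonneg (M x : ℝ) : 0 ≤ wcl M x := le_max_left _ _

lemma wcl_le {M : ℝ} (hM : 0 ≤ M) (x : ℝ) : wcl M x ≤ M :=
  max_le hM (min_le_right _ _)

lemma wcl_lip (M x y : ℝ) : |wcl M x - wcl M y| ≤ |x - y| := by
  unfold wcl
  have h1 := abs_max_sub_max_le_abs (min x M) (min y M) 0
  rw [max_comm 0, max_comm 0]
  refine h1.trans ?_
  have h2 := abs_min_sub_min_le_max x M y M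
  simpa using h2

lemma wcl_cont (M : ℝ) : Continuous (wcl M) := by
  unfold wcl; fun_prop

/-- the profile determined by `σ`. -/
def wV (M : ℝ) (σ : ℝ → ℝ) (y : ℝ) : ℝ :=
  1 + y ^ 2 * ∫ ξ in (0:ℝ)..1, ξ * wcl M (σ (y * ξ))

def wG (a b M : ℝ) (σ : ℝ → ℝ) (y : ℝ) : ℝ :=
  b * (1 + y ^ 2 * (wcl M (σ y)) ^ 2) / wV M σ y - a * y ^ 2 * (wcl M (σ y)) ^ 3

def wT (k : ℕ) (a b M : ℝ) (σ : ℝ → ℝ) (r : ℝ) : ℝ :=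
  ∫ x in (0:ℝ)..1, x ^ k * wG a b M σ (r * x)

lemma wV_cont {M : ℝ} {σ : ℝ → ℝ} (hσ : Continuous σ) : Continuous (wV M σ) := by
  unfold wV
  have : Continuous (fun y : ℝ => ∫ ξ in (0:ℝ)..1, ξ * wcl M (σ (y * ξ))) := by
    apply intervalIntegral.continuous_parametric_intervalIntegral_of_continuous'
    have := wcl_cont M
    unfold Function.uncurry
    fun_prop
  fun_prop

lemma wV_ge {M : ℝ} {σ : ℝ → ℝ} (y : ℝ) : 1 ≤ wV M σ y := by
  unfold wV
  have : 0 ≤ ∫ ξ in (0:ℝ)..1, ξ * wcl M (σ (y * ξ)) := by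
    apply intervalIntegral.integral_nonneg (by norm_num)
    intro u hu
    exact mul_nonneg hu.1 (wcl_nonneg _ _)
  nlinarith [mul_nonneg (sq_nonneg y) this]

lemma wG_cont {a b M : ℝ} {σ : ℝ → ℝ} (hσ : Continuous σ) : Continuous (wG a b M σ) := by
  unfold wG
  have h1 := wcl_cont M
  have h2 : Continuous (wV M σ) := wV_cont hσ
  have h3 : ∀ y, wV M σ y ≠ 0 := fun y => by have := wV_ge (M := M) (σ := σ) y; linarith
  fun_prop (disch := assumption)

lemma wT_cont {k : ℕ} {a b M : ℝ} {σ : ℝ → ℝ} (hσ : Continuous σ) :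
    Continuous (wT k a b M σ) := by
  unfold wT
  apply intervalIntegral.continuous_parametric_intervalIntegral_of_continuous'
  have := wG_cont (a := a) (b := b) (M := M) hσ
  unfold Function.uncurry
  fun_prop

lemma wG_bound {a b M : ℝ} (ha : 0 ≤ a) (hb : 0 ≤ b) (hM : 0 ≤ M) (σ : ℝ → ℝ) (y : ℝ) :
    |wG a b M σ y| ≤ (b + b * M ^ 2 + a * M ^ 3) * (1 + y ^ 2) := by
  unfold wG
  have hv := wV_ge (M := M) (σ := σ) y
  have h0 := wcl_nonneg M (σ y)
  have h1 := wcl_le hM (σ y)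
  set c := wcl M (σ y)
  have h2 : c ^ 2 ≤ M ^ 2 := by gcongr
  have h3 : c ^ 3 ≤ M ^ 3 := by gcongr
  have h4 : 0 ≤ b * (1 + y ^ 2 * c ^ 2) / wV M σ y := by positivity
  have h5 : b * (1 + y ^ 2 * c ^ 2) / wV M σ y ≤ b * (1 + y ^ 2 * M ^ 2) := by
    calc _ ≤ b * (1 + y ^ 2 * c ^ 2) / 1 := by gcongr
      _ = b * (1 + y ^ 2 * c ^ 2) := by ring
      _ ≤ _ := by gcongr
  have h6 : a * y ^ 2 * c ^ 3 ≤ a * y ^ 2 * M ^ 3 := by gcongr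
  have h7 : 0 ≤ a * y ^ 2 * c ^ 3 := by positivity
  have h8 : 0 ≤ b * y ^ 2 := by positivity
  have h9 : 0 ≤ b * M ^ 2 := by positivity
  have h10 : 0 ≤ a * M ^ 3 := by positivity
  have h11 : 0 ≤ b * M ^ 2 * y ^ 2:= by positivity
  have h12 : 0 ≤ a * M ^ 3 * y ^ 2:= by positivity
  rw [abs_le]
  constructor <;> nlinarith

lemma wT_bound {k : ℕ} {a b M : ℝ} (ha : 0 ≤ a) (hb : 0 ≤ b) (hM : 0 ≤ M) (σ : ℝ → ℝ)
    (r : ℝ) : |wT k a b M σ r| ≤ (b + b * M ^ 2 + a * M ^ 3) * (1 + r ^ 2) := by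
  unfold wT
  have := intervalIntegral.norm_integral_le_of_norm_le_const (a := (0:ℝ)) (b := 1)
    (f := fun x => x ^ k * wG a b M σ (r * x))
    (C := (b + b * M ^ 2 + a * M ^ 3) * (1 + r ^ 2)) ?_
  · simpa using this
  · intro x hx
    rw [Set.uIoc_of_le zero_le_one] at hx
    have hx0 : 0 ≤ x := hx.1.le
    have hx1 : x ≤ 1 := hx.2
    rw [norm_mul, Real.norm_eq_abs, Real.norm_eq_abs]
    have h1 : |x ^ k| ≤ 1 := by
      rw [abs_of_nonneg (by positivity)]; exact pow_le_one₀ hx0 hx1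
    have h2 := wG_bound ha hb hM σ (r * x)
    have h3 : (r * x) ^ 2 ≤ r ^ 2 := by
      rw [mul_pow]; nlinarith [sq_nonneg r, mul_nonneg hx0 (sub_nonneg.2 hx1), pow_le_one₀ hx0 hx1 (n := 2)]
    calc |x ^ k| * |wG a b M σ (r * x)| ≤ 1 * ((b + b * M ^ 2 + a * M ^ 3) * (1 + (r * x) ^ 2)) := by
          gcongr
      _ ≤ _ := by rw [one_mul]; gcongr

def wP (C y : ℝ) : ℝ := C * (y ^ 2 + y ^ 4 / 2)

lemma wP_cont (C : ℝ) : Continuous (wP C) := by unfold wP; fun_prop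

lemma wP_mono {C : ℝ} (hC : 0 ≤ C) (y ξ : ℝ) (h0 : 0 ≤ ξ) (h1 : ξ ≤ 1) :
    wP C (y * ξ) ≤ wP C y := by
  unfold wP
  rw [mul_pow, mul_pow]
  have := pow_le_one₀ h0 h1 (n := 2)
  have := pow_le_one₀ h0 h1 (n := 4)
  gcongr
  · exact mul_le_of_le_one_right (by positivity) (by assumption)
  · exact mul_le_of_le_one_right (by positivity) (by assumption)

lemma wV_lip {M C N : ℝ} (hC : 0 ≤ C) (hN : 0 ≤ N) {σ τ : ℝ → ℝ}
    (hσ : Continuous σ) (hτ : Continuous τ)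
    (h : ∀ y, |σ y - τ y| ≤ N * exp (wP C y)) (y : ℝ) :
    |wV M σ y - wV M τ y| ≤ y ^ 2 * (N * exp (wP C y)) := by
  unfold wV
  have hc := wcl_cont M
  have e : (1 + y ^ 2 * ∫ ξ in (0:ℝ)..1, ξ * wcl M (σ (y * ξ))) -
      (1 + y ^ 2 * ∫ ξ in (0:ℝ)..1, ξ * wcl M (τ (y * ξ))) =
      y ^ 2 * ∫ ξ in (0:ℝ)..1, (ξ * wcl M (σ (y * ξ)) - ξ * wcl M (τ (y * ξ))) := by
    rw [intervalIntegral.integral_sub]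
    · ring
    · apply Continuous.intervalIntegrable; fun_prop
    · apply Continuous.intervalIntegrable; fun_prop
  rw [e, abs_mul, abs_of_nonneg (sq_nonneg y)]
  gcongr
  have := intervalIntegral.norm_integral_le_of_norm_le_const (a := (0:ℝ)) (b := 1)
    (f := fun ξ => (ξ * wcl M (σ (y * ξ)) - ξ * wcl M (τ (y * ξ))))
    (C := N * exp (wP C y)) ?_
  · simpa using this
  · intro x hx
    rw [Set.uIoc_of_le zero_le_one] at hx
    have hx0 : 0 ≤ x := hx.1.le
    have hx1 : x ≤ 1 := hx.2
    rw [← mul_sub, norm_mul, Real.norm_eq_abs, Real.norm_eq_abs, abs_of_nonneg hx0]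
    calc x * |wcl M (σ (y * x)) - wcl M (τ (y * x))| ≤ 1 * (N * exp (wP C (y * x))) := by
          gcongr
          exact (wcl_lip _ _ _).trans (h _)
      _ ≤ _ := by
          rw [one_mul]; gcongr; exact wP_mono hC y x hx0 hx1

lemma wG_lip {a b M C N : ℝ} (ha : 0 ≤ a) (hb : 0 ≤ b) (hM : 0 ≤ M)
    (hC : b + 2 * M * b + b * M ^ 2 + 3 * a * M ^ 2 ≤ C) (hN : 0 ≤ N) {σ τ : ℝ → ℝ}
    (hσ : Continuous σ) (hτ : Continuous τ)
    (h : ∀ y, |σ y - τ y| ≤ N * exp (wP C y)) (y : ℝ) :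
    |wG a b M σ y - wG a b M τ y| ≤ C * y ^ 2 * (1 + y ^ 2) * (N * exp (wP C y)) := by
  have hC0 : 0 ≤ C := le_trans (by positivity) hC
  have hV := wV_lip (M := M) hC0 hN hσ hτ h y
  have hS : |wcl M (σ y) - wcl M (τ y)| ≤ N * exp (wP C y) := (wcl_lip _ _ _).trans (h y)
  set E := N * exp (wP C y)
  have hE : 0 ≤ E := by positivity
  unfold wG
  have hv := wV_ge (M := M) (σ := σ) y
  have hw := wV_ge (M := M) (σ := τ) y
  have hc0 := wcl_nonneg M (σ y)
  have hc1 := wcl_le hM (σ y)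
  have hd0 := wcl_nonneg M (τ y)
  have hd1 := wcl_le hM (τ y)
  set c := wcl M (σ y)
  set d := wcl M (τ y)
  set v := wV M σ y
  set w := wV M τ y
  have e : b * (1 + y ^ 2 * c ^ 2) / v - a * y ^ 2 * c ^ 3 -
      (b * (1 + y ^ 2 * d ^ 2) / w - a * y ^ 2 * d ^ 3) =
      (b * (1 + y ^ 2 * d ^ 2) / (v * w)) * (w - v) +
      (b * y ^ 2 * (c + d) / v) * (c - d) - a * y ^ 2 * (c ^ 2 + c * d + d ^ 2) * (c - d) := by
    field_simp
    ring
  rw [e]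
  have hvw : 1 ≤ v * w := by nlinarith
  have b1 : |(b * (1 + y ^ 2 * d ^ 2) / (v * w)) * (w - v)| ≤
      b * (1 + y ^ 2 * M ^ 2) * (y ^ 2 * E) := by
    rw [abs_mul, abs_of_nonneg (by positivity), abs_sub_comm]
    gcongr
    calc _ ≤ b * (1 + y ^ 2 * d ^ 2) / 1 := by gcongr
      _ = b * (1 + y ^ 2 * d ^ 2) := by ring
      _ ≤ _ := by gcongr
  have b2 : |(b * y ^ 2 * (c + d) / v) * (c - d)| ≤ b * y ^ 2 * (M + M) * E := by
    rw [abs_mul, abs_of_nonneg (by positivity)]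
    gcongr
    calc _ ≤ b * y ^ 2 * (c + d) / 1 := by gcongr
      _ = b * y ^ 2 * (c + d) := by ring
      _ ≤ _ := by gcongr
  have b3 : |a * y ^ 2 * (c ^ 2 + c * d + d ^ 2) * (c - d)| ≤
      a * y ^ 2 * (M ^ 2 + M * M + M ^ 2) * E := by
    rw [abs_mul, abs_of_nonneg (by positivity)]
    gcongr
  have b4 := abs_sub ((b * (1 + y ^ 2 * d ^ 2) / (v * w)) * (w - v) +
      (b * y ^ 2 * (c + d) / v) * (c - d)) (a * y ^ 2 * (c ^ 2 + c * d + d ^ 2) * (c - d))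
  have b5 := abs_add_le ((b * (1 + y ^ 2 * d ^ 2) / (v * w)) * (w - v))
      ((b * y ^ 2 * (c + d) / v) * (c - d))
  have hyE : 0 ≤ y ^ 2 * E := by positivity
  have key : b * (1 + y ^ 2 * M ^ 2) + b * (M + M) + a * (M ^ 2 + M * M + M ^ 2) ≤
      C * (1 + y ^ 2) := by
    have : (b + 2 * M * b + b * M ^ 2 + 3 * a * M ^ 2) * (1 + y ^ 2) ≤ C * (1 + y ^ 2) := by
      gcongr
    have h1 : 0 ≤ (b + 2 * M * b + 3 * a * M ^ 2) * y ^ 2 := by positivity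
    have h2 : 0 ≤ b * M ^ 2 := by positivity
    nlinarith
  have key2 := mul_le_mul_of_nonneg_right key hyE
  linarith

lemma wT_lip {k : ℕ} {a b M C N : ℝ} (ha : 0 ≤ a) (hb : 0 ≤ b) (hM : 0 ≤ M)
    (hC : b + 2 * M * b + b * M ^ 2 + 3 * a * M ^ 2 ≤ C) (hN : 0 ≤ N) {σ τ : ℝ → ℝ}
    (hσ : Continuous σ) (hτ : Continuous τ)
    (h : ∀ y, |σ y - τ y| ≤ N * exp (wP C y)) (r : ℝ) :
    |wT k a b M σ r - wT k a b M τ r| ≤ N / 2 * exp (wP C r) := by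
  have hC0 : 0 ≤ C := le_trans (by positivity) hC
  have hg1 := wG_cont (a := a) (b := b) (M := M) hσ
  have hg2 := wG_cont (a := a) (b := b) (M := M) hτ
  have hPc := wP_cont C
  unfold wT
  rw [← intervalIntegral.integral_sub]
  rotate_left
  · apply Continuous.intervalIntegrable; fun_prop
  · apply Continuous.intervalIntegrable; fun_prop
  have hd : ∀ x ∈ Set.uIcc (0:ℝ) 1, HasDerivAt (fun x => N / 2 * exp (wP C (r * x)))
      (N / 2 * (exp (wP C (r * x)) * (C * (2 * r ^ 2 * x + 2 * r ^ 4 * x ^ 3)))) x := by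
    intro x _
    have : HasDerivAt (fun x => wP C (r * x)) (C * (2 * r ^ 2 * x + 2 * r ^ 4 * x ^ 3)) x := by
      unfold wP
      have h1 := (hasDerivAt_id x).const_mul r
      have h2 := ((h1.pow 2).add ((h1.pow 4).div_const 2)).const_mul C
      refine (h2.congr_deriv ?_)
      push_cast
      simp only [id]
      ring
    exact (this.exp).const_mul _
  have hI := intervalIntegral.integral_eq_sub_of_hasDerivAt hd
    (by apply Continuous.intervalIntegrable; fun_prop)
  have h1 : ‖∫ x in (0:ℝ)..1, (x ^ k * wG a b M σ (r * x) - x ^ k * wG a b M τ (r * x))‖ ≤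
      ∫ x in (0:ℝ)..1,
      (N / 2 * (exp (wP C (r * x)) * (C * (2 * r ^ 2 * x + 2 * r ^ 4 * x ^ 3)))) := by
    apply intervalIntegral.norm_integral_le_of_norm_le zero_le_one
    · refine Eventually.of_forall fun x hx => ?_
      have hx0 : 0 ≤ x := hx.1.le
      have hx1 : x ≤ 1 := hx.2
      rw [← mul_sub, norm_mul, Real.norm_eq_abs, Real.norm_eq_abs, abs_of_nonneg (by positivity)]
      have hl := wG_lip ha hb hM hC hN hσ hτ h (r * x)
      have hxk := pow_le_one₀ hx0 hx1 (n := k)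
      have hE : 0 ≤ N * exp (wP C (r * x)) := by positivity
      calc _ ≤ 1 * (C * (r * x) ^ 2 * (1 + (r * x) ^ 2) * (N * exp (wP C (r * x)))) := by gcongr
        _ = (C * (r ^ 2 * x ^ 2 + r ^ 4 * x ^ 4)) * (N * exp (wP C (r * x))) := by ring
        _ ≤ (C * (r ^ 2 * x + r ^ 4 * x ^ 3)) * (N * exp (wP C (r * x))) := by
            gcongr C * (r ^ 2 * ?_ + r ^ 4 * ?_) * _
            · exact pow_le_of_le_one hx0 hx1 (by norm_num)
            · exact pow_le_pow_of_le_one hx0 hx1 (by norm_num)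
        _ = _ := by ring
    · apply Continuous.intervalIntegrable; fun_prop
  rw [hI] at h1
  rw [Real.norm_eq_abs] at h1
  refine h1.trans ?_
  have : 0 ≤ N / 2 * exp (wP C (r * 0)) := by positivity
  rw [mul_one]; linarith

lemma wT_fix (k : ℕ) {a b M : ℝ} (ha : 0 ≤ a) (hb : 0 ≤ b) (hM : 0 ≤ M) :
    ∃ σ : ℝ → ℝ, Continuous σ ∧ ∀ r, σ r = wT k a b M σ r := by
  obtain ⟨C, hC, hC1⟩ : ∃ C, b + 2 * M * b + b * M ^ 2 + 3 * a * M ^ 2 ≤ C ∧ 1 ≤ C :=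
    ⟨_, le_max_left _ _, le_max_right _ 1⟩
  have hPc := wP_cont C
  have hs : ∀ h : BoundedContinuousFunction ℝ ℝ, Continuous (fun y => h y * exp (wP C y)) := by
    intro h
    have := h.continuous
    fun_prop
  let Φ : BoundedContinuousFunction ℝ ℝ → BoundedContinuousFunction ℝ ℝ := fun h =>
    BoundedContinuousFunction.ofNormedAddCommGroup
      (fun r => exp (-wP C r) * wT k a b M (fun y => h y * exp (wP C y)) r)
      (by
        have := wT_cont (k := k) (a := a) (b := b) (M := M) (hs h)
        fun_prop)
      (b + b * M ^ 2 + a * M ^ 3)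
      (by
        intro r
        rw [norm_mul, Real.norm_eq_abs, Real.norm_eq_abs, abs_of_pos (exp_pos _)]
        have h1 := wT_bound (k := k) ha hb hM (fun y => h y * exp (wP C y)) r
        have h2 : 1 + r ^ 2 ≤ exp (wP C r) := by
          have := add_one_le_exp (wP C r)
          have h3 : r ^ 2 ≤ wP C r := by
            unfold wP; nlinarith [sq_nonneg r, sq_nonneg (r^2)]
          linarith
        have hD : 0 ≤ b + b * M ^ 2 + a * M ^ 3 := by positivity
        calc _ ≤ exp (-wP C r) * ((b + b * M ^ 2 + a * M ^ 3) * exp (wP C r)) := by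
              gcongr; exact h1.trans (by gcongr)
          _ = (b + b * M ^ 2 + a * M ^ 3) * (exp (-wP C r) * exp (wP C r)) := by ring
          _ = _ := by rw [← exp_add]; simp)
  have hcon : ContractingWith (1/2) Φ := by
    refine ⟨by rw [← NNReal.coe_lt_coe]; norm_num, LipschitzWith.of_dist_le_mul fun h₁ h₂ => ?_⟩
    rw [BoundedContinuousFunction.dist_le (by positivity)]
    intro r
    have := wT_lip (k := k) ha hb hM hC (dist_nonneg (x := h₁) (y := h₂)) (hs h₁) (hs h₂) (by
      intro y
      rw [← sub_mul, abs_mul, abs_of_pos (exp_pos _)]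
      gcongr
      rw [← Real.dist_eq]
      exact BoundedContinuousFunction.dist_coe_le_dist (f := h₁) (g := h₂) y) r
    change |exp (-wP C r) * wT k a b M (fun y => h₁ y * exp (wP C y)) r -
      exp (-wP C r) * wT k a b M (fun y => h₂ y * exp (wP C y)) r| ≤ _
    rw [← mul_sub, abs_mul, abs_of_pos (exp_pos _)]
    calc _ ≤ exp (-wP C r) * (dist h₁ h₂ / 2 * exp (wP C r)) := by gcongr
      _ = dist h₁ h₂ / 2 * (exp (-wP C r) * exp (wP C r)) := by ring
      _ = dist h₁ h₂ / 2 := by rw [← exp_add]; simp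
      _ = _ := by simp; ring
  let h := hcon.fixedPoint
  have hfix : Φ h = h := hcon.fixedPoint_isFixedPt
  refine ⟨fun y => h y * exp (wP C y), hs h, fun r => ?_⟩
  have h1 : exp (-wP C r) * wT k a b M (fun y => h y * exp (wP C y)) r = h r :=
    congrArg (fun g : BoundedContinuousFunction ℝ ℝ => g r) hfix
  change h r * exp (wP C r) = _
  rw [← h1]
  calc _ = (exp (-wP C r) * exp (wP C r)) * wT k a b M (fun y => h y * exp (wP C y)) r := by ring
    _ = _ := by rw [← exp_add]; simp

end WigglyFix

section WigglyProfile

lemma wV_deriv {M : ℝ} {σ : ℝ → ℝ} (hσ : Continuous σ) (r : ℝ) :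
    HasDerivAt (wV M σ) (r * wcl M (σ r)) r := by
  have hc := wcl_cont M
  have e : wV M σ = fun r => 1 + ∫ ρ in (0:ℝ)..r, ρ * wcl M (σ ρ) := by
    funext r
    unfold wV
    have := intervalIntegral.mul_integral_comp_mul_left (a := 0) (b := 1) (c := r)
      (f := fun ρ => ρ * wcl M (σ ρ))
    rw [mul_zero, mul_one] at this
    rw [← this]
    have e2 : ∀ x, r * x * wcl M (σ (r * x)) = r * (x * wcl M (σ (r * x))) := fun x => by ring
    simp only [e2, intervalIntegral.integral_const_mul]
    ring
  rw [e]
  have hf : Continuous (fun ρ => ρ * wcl M (σ ρ)) := by fun_prop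
  exact (hf.integral_hasStrictDerivAt 0 r).hasDerivAt.const_add 1

lemma wT_deriv {k : ℕ} {a b M : ℝ} {σ : ℝ → ℝ} (hσ : Continuous σ)
    (hfix : ∀ r, σ r = wT k a b M σ r) {r : ℝ} (hr : 0 < r) :
    HasDerivAt σ ((wG a b M σ r - (k + 1) * σ r) / r) r := by
  have hc := wG_cont (a := a) (b := b) (M := M) hσ
  have e : ∀ r, r ^ (k + 1) * σ r = ∫ ρ in (0:ℝ)..r, ρ ^ k * wG a b M σ ρ := by
    intro r
    rw [hfix r]
    unfold wT
    have := intervalIntegral.mul_integral_comp_mul_left (a := 0) (b := 1) (c := r)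
      (f := fun ρ => ρ ^ k * wG a b M σ ρ)
    rw [mul_zero, mul_one] at this
    rw [← this]
    have e2 : ∀ x, (r * x) ^ k * wG a b M σ (r * x) = r ^ k * (x ^ k * wG a b M σ (r * x)) :=
      fun x => by rw [mul_pow]; ring
    simp only [e2, intervalIntegral.integral_const_mul]
    ring
  have hf : Continuous (fun ρ => ρ ^ k * wG a b M σ ρ) := by fun_prop
  have h1 := (hf.integral_hasStrictDerivAt 0 r).hasDerivAt
  have h2 : HasDerivAt (fun r : ℝ => r ^ (k + 1)) ((k + 1) * r ^ k) r := by
    simpa using hasDerivAt_pow (k + 1) r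
  have hne : r ^ (k + 1) ≠ 0 := by positivity
  have h3 := h1.div h2 hne
  have h4 : σ =ᶠ[nhds r] (fun r => (∫ ρ in (0:ℝ)..r, ρ ^ k * wG a b M σ ρ)) /
      (fun r => r ^ (k + 1)) := by
    filter_upwards [lt_mem_nhds hr] with x hx
    have hne : x ^ (k + 1) ≠ 0 := by positivity
    simp only [Pi.div_apply]
    rw [← e x, mul_div_cancel_left₀ _ hne]
  refine (h3.congr_of_eventuallyEq h4).congr_deriv ?_
  rw [← e r]
  field_simp
  ring

lemma wiggly_profile (k : ℕ) {a b : ℝ} (ha : 0 < a) (hak : a = k) (hb : 0 < b) :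
    ∃ v s : ℝ → ℝ, Continuous v ∧ Continuous s ∧ v 0 = 1 ∧ s 0 = 0 ∧
      (∀ r, 1 ≤ v r) ∧ (∀ r ≥ 0, 0 ≤ s r) ∧ (∀ r > 0, HasDerivAt v (s r) r) ∧
      (∀ r > 0, HasDerivAt s ((1 + s r ^ 2) * (b / v r - a * s r / r)) r) := by
  set M := b / a with hM
  have hM0 : 0 < M := by positivity
  have haM : a * M = b := by rw [hM]; field_simp
  obtain ⟨σ, hσ, hfix⟩ := wT_fix k ha.le hb.le hM0.le
  have hd : ∀ r > 0, HasDerivAt σ ((wG a b M σ r - (a + 1) * σ r) / r) r := by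
    intro r hr
    rw [hak]
    have := wT_deriv hσ hfix hr
    rwa [hak] at this
  have h0 : σ 0 = b / (a + 1) := by
    rw [hfix 0]
    unfold wT
    have : wG a b M σ 0 = b := by simp [wG, wV]
    simp only [zero_mul, this, intervalIntegral.integral_mul_const, integral_pow]
    rw [hak]; simp
    ring
  have h0pos : 0 < σ 0 := by rw [h0]; positivity
  have h0lt : σ 0 < M := by
    rw [h0, hM]; apply div_lt_div_of_pos_left hb ha; linarith
  have hbd : ∀ r ≥ 0, 0 ≤ σ r ∧ σ r ≤ M := by
    intro R hR
    have hev : ∀ᶠ x in nhds (0:ℝ), 0 < σ x ∧ σ x < M := by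
      filter_upwards [hσ.continuousAt.eventually (lt_mem_nhds h0pos),
        hσ.continuousAt.eventually (gt_mem_nhds h0lt)] with x h1 h2 using ⟨h1, h2⟩
    obtain ⟨ε, hε, hev⟩ := Metric.eventually_nhds_iff.1 hev
    by_cases hRε : R < ε
    · have := hev (y := R) (by rw [Real.dist_eq, sub_zero, abs_of_nonneg hR]; exact hRε)
      exact ⟨this.1.le, this.2.le⟩
    have hε2 := hev (y := ε / 2) (by
      rw [Real.dist_eq, sub_zero, abs_of_nonneg (by positivity)]; linarith)
    have hRI : R ∈ Set.Icc (ε / 2) R := ⟨by linarith, le_rfl⟩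
    constructor
    · have := image_le_of_deriv_right_lt_deriv_boundary (f := fun x => - σ x)
        (f' := fun r => - ((wG a b M σ r - (a + 1) * σ r) / r)) (a := ε / 2) (b := R)
        (B := fun _ => 0) (B' := fun _ => 0) (by fun_prop)
        (fun x hx => (hd x (by linarith [hx.1])).neg.hasDerivWithinAt)
        (by linarith [hε2.1]) (fun x => hasDerivAt_const _ _) (by
          intro x hx hx0
          have hσ0 : σ x = 0 := by linarith
          have hx1 : 0 < x := by linarith [hx.1]
          have hv := wV_ge (M := M) (σ := σ) x
          have : wcl M (σ x) = 0 := by rw [hσ0]; simp [wcl, hM0.le]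
          have hG : wG a b M σ x = b / wV M σ x := by simp [wG, this]
          rw [hG, hσ0]
          have : 0 < (b / wV M σ x - (a + 1) * 0) / x := by
            rw [mul_zero, sub_zero]; positivity
          linarith) hRI
      linarith
    · have := image_le_of_deriv_right_lt_deriv_boundary (f := σ)
        (f' := fun r => ((wG a b M σ r - (a + 1) * σ r) / r)) (a := ε / 2) (b := R)
        (B := fun _ => M) (B' := fun _ => 0) (by fun_prop)
        (fun x hx => (hd x (by linarith [hx.1])).hasDerivWithinAt)
        (by linarith [hε2.2]) (fun x => hasDerivAt_const _ _) (by
          intro x hx hx0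
          have hx1 : 0 < x := by linarith [hx.1]
          have hv := wV_ge (M := M) (σ := σ) x
          have : wcl M (σ x) = M := by rw [hx0]; simp [wcl, hM0.le]
          have hG : wG a b M σ x ≤ b := by
            simp only [wG, this]
            have h1 : b * (1 + x ^ 2 * M ^ 2) / wV M σ x ≤ b * (1 + x ^ 2 * M ^ 2) / 1 := by
              gcongr
            have h2 : a * x ^ 2 * M ^ 3 = b * x ^ 2 * M ^ 2 := by rw [← haM]; ring
            rw [h2]
            linarith
          apply div_neg_of_neg_of_pos _ hx1
          rw [hx0]
          nlinarith) hRI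
      exact this
  have hcl : ∀ r ≥ 0, wcl M (σ r) = σ r := by
    intro r hr
    have := hbd r hr
    unfold wcl
    rw [min_eq_left this.2, max_eq_right this.1]
  refine ⟨wV M σ, fun r => r * σ r, wV_cont hσ, by fun_prop, by simp [wV], by simp,
    wV_ge, fun r hr => mul_nonneg hr (hbd r hr).1, fun r hr => ?_, fun r hr => ?_⟩
  · have := wV_deriv (M := M) hσ r
    rwa [hcl r hr.le] at this
  · have h1 := (hasDerivAt_id r).mul (hd r hr)
    refine h1.congr_deriv ?_
    have hv := wV_ge (M := M) (σ := σ) r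
    simp only [wG, hcl r hr.le, id]
    field_simp
    ring

end WigglyProfile

section WigglyLimit

lemma wiggly_barbalat {f f' : ℝ → ℝ} {L : ℝ} (hf : ∀ t ≥ 0, HasDerivAt f (f' t) t)
    (hL : Tendsto f atTop (nhds L)) (huc : UniformContinuousOn f' (Set.Ici 0)) :
    Tendsto f' atTop (nhds 0) := by
  rw [Metric.tendsto_atTop]
  intro ε hε
  obtain ⟨δ, hδ, hu⟩ := Metric.uniformContinuousOn_iff.1 huc (ε / 2) (by positivity)
  obtain ⟨N, hN⟩ := Metric.tendsto_atTop.1 hL (ε * δ / 8) (by positivity)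
  refine ⟨max N 0, fun t ht => ?_⟩
  have htN : N ≤ t := le_trans (le_max_left _ _) ht
  have ht0 : 0 ≤ t := le_trans (le_max_right _ _) ht
  have hlt : t < t + δ / 2 := by linarith
  obtain ⟨c, hc, hcd⟩ := exists_hasDerivAt_eq_slope f f' hlt
    (fun x hx => (hf x (le_trans ht0 hx.1)).continuousAt.continuousWithinAt)
    (fun x hx => hf x (le_trans ht0 hx.1.le))
  have h1 := hN t htN
  have h2 := hN (t + δ / 2) (by linarith)
  rw [Real.dist_eq, abs_lt] at h1 h2
  have h3 : |f' c| < ε / 2 := by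
    rw [hcd, add_sub_cancel_left, abs_div, abs_of_pos (by positivity : 0 < δ / 2),
      div_lt_iff₀ (by positivity), abs_lt]
    constructor <;> linarith [h1.1, h1.2, h2.1, h2.2]
  have h4 := hu t ht0 c (le_trans ht0 hc.1.le) (by
    rw [Real.dist_eq, abs_lt]; constructor <;> linarith [hc.1, hc.2])
  rw [Real.dist_eq] at h4 ⊢
  rw [abs_lt] at *
  constructor <;> linarith [h3.1, h3.2, h4.1, h4.2]

/-- Barbalat along a bounded Lipschitz planar path. -/
lemma wiggly_barbalat_path {Z S Z' S' f : ℝ → ℝ} {L K : ℝ} {A : Set (ℝ × ℝ)}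
    (hA : IsCompact A) (hZS : ∀ t ≥ 0, (Z t, S t) ∈ A)
    (hZ : ∀ t, HasDerivAt Z (Z' t) t) (hS : ∀ t, HasDerivAt S (S' t) t)
    (hZK : ∀ t ≥ 0, |Z' t| ≤ K) (hSK : ∀ t ≥ 0, |S' t| ≤ K)
    {Φ : ℝ × ℝ → ℝ} (hΦ : ContinuousOn Φ A)
    (hf : ∀ t ≥ 0, HasDerivAt f (Φ (Z t, S t)) t)
    (hL : Tendsto f atTop (nhds L)) :
    Tendsto (fun t => Φ (Z t, S t)) atTop (nhds 0) := by
  apply wiggly_barbalat hf hL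
  have hK : 0 ≤ K := le_trans (abs_nonneg _) (hZK 0 le_rfl)
  have u1 : UniformContinuousOn Φ A := hA.uniformContinuousOn_of_continuous hΦ
  have l1 : LipschitzOnWith K.toNNReal Z (Set.Ici 0) := by
    apply (convex_Ici 0).lipschitzOnWith_of_nnnorm_hasDerivWithin_le
      (fun x _ => (hZ x).hasDerivWithinAt)
    intro x hx
    rw [← NNReal.coe_le_coe, coe_nnnorm, Real.coe_toNNReal _ hK]
    exact hZK x hx
  have l2 : LipschitzOnWith K.toNNReal S (Set.Ici 0) := by
    apply (convex_Ici 0).lipschitzOnWith_of_nnnorm_hasDerivWithin_le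
      (fun x _ => (hS x).hasDerivWithinAt)
    intro x hx
    rw [← NNReal.coe_le_coe, coe_nnnorm, Real.coe_toNNReal _ hK]
    exact hSK x hx
  have u2 : UniformContinuousOn (fun t => (Z t, S t)) (Set.Ici 0) :=
    (l1.prodMk l2).uniformContinuousOn
  exact u1.comp u2 (fun t ht => hZS t ht)

lemma wiggly_limit {a b : ℝ} (ha : 0 < a) (hb : 0 < b) {Z S : ℝ → ℝ}
    (hZ : ∀ t, HasDerivAt Z (Z t - Z t ^ 2 * S t) t)
    (hS : ∀ t, HasDerivAt S ((1 + S t ^ 2) * (b * Z t - a * S t)) t)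
    (hZ0 : ∀ t, 0 < Z t) (hS0 : ∀ t, 0 ≤ S t) :
    Tendsto Z atTop (nhds (√(a / b))) ∧ Tendsto S atTop (nhds (√(b / a))) := by
  -- Lyapunov function
  set F : ℝ → ℝ := fun t => 2 * log (Z t + S t) + 2 * a * log (Z t) - log (1 + S t ^ 2)
    - (a + b + 1) * log (1 + Z t ^ 2) with hF
  set Φ : ℝ × ℝ → ℝ := fun x => 2 * (a + b + 1) * (x.1 * x.2 - 1) ^ 2 * x.1 /
    ((x.1 + x.2) * (1 + x.1 ^ 2)) with hΦ
  have hFd : ∀ t, HasDerivAt F (Φ (Z t, S t)) t := by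
    intro t
    have hz := hZ0 t
    have hs := hS0 t
    have h1 := (((hZ t).add (hS t)).log (by simp only [Pi.add_apply]; positivity)).const_mul 2
    have h2 := ((hZ t).log hz.ne').const_mul (2 * a)
    have h3 := (((hS t).pow 2).const_add 1).log (by simp only [Pi.pow_apply]; positivity)
    have h4 := ((((hZ t).pow 2).const_add 1).log
      (by simp only [Pi.pow_apply]; positivity)).const_mul (a + b + 1)
    refine (((h1.add h2).sub h3).sub h4).congr_deriv ?_
    simp only [hΦ, Pi.add_apply, Pi.pow_apply]
    have : Z t + S t ≠ 0 := by positivity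
    field_simp
    push_cast
    ring
  have hΦ0 : ∀ t, 0 ≤ Φ (Z t, S t) := by
    intro t
    have hz := hZ0 t
    have hs := hS0 t
    simp only [hΦ]
    positivity
  have hmono : Monotone F := monotone_of_hasDerivAt_nonneg hFd hΦ0
  -- bounds on F
  have hFle : ∀ t, F t ≤ 2 * a * log (Z t) - (a + b) * log (1 + Z t ^ 2) := by
    intro t
    have hz := hZ0 t
    have hs := hS0 t
    have : 2 * log (Z t + S t) ≤ log (1 + S t ^ 2) + log (1 + Z t ^ 2) := by
      rw [← log_mul (by positivity) (by positivity)]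
      have : 2 * log (Z t + S t) = log ((Z t + S t) ^ 2) := by rw [log_pow]; norm_num
      rw [this]
      apply log_le_log (by positivity)
      nlinarith [sq_nonneg (Z t * S t - 1)]
    simp only [hF]
    linarith
  have hlog2 : ∀ t, 2 * log (Z t) ≤ log (1 + Z t ^ 2) := by
    intro t
    have hz := hZ0 t
    have : 2 * log (Z t) = log ((Z t) ^ 2) := by rw [log_pow]; norm_num
    rw [this]
    apply log_le_log (by positivity)
    linarith
  have hlog0 : ∀ t, 0 ≤ log (1 + Z t ^ 2) := fun t => log_nonneg (by nlinarith [sq_nonneg (Z t)])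
  have hF0 : ∀ t, F t ≤ 0 := by
    intro t
    have h1 := hFle t
    have h2 := hlog2 t
    have h3 := hlog0 t
    nlinarith
  have hFlim : ∃ L, Tendsto F atTop (nhds L) :=
    ⟨_, tendsto_atTop_ciSup hmono ⟨0, by rintro _ ⟨t, rfl⟩; exact hF0 t⟩⟩
  obtain ⟨L, hL⟩ := hFlim
  -- bounds on Z
  set z0 := exp (F 0 / (2 * a)) with hz0
  set z1 := exp (-(F 0) / (2 * b)) with hz1
  have hz0p : 0 < z0 := exp_pos _
  have hz1p : 0 < z1 := exp_pos _
  have hZlo : ∀ t ≥ 0, z0 ≤ Z t := by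
    intro t ht
    rw [hz0, ← Real.le_log_iff_exp_le (hZ0 t), div_le_iff₀ (by positivity)]
    have h1 := hFle t
    have h2 := hmono ht
    have h3 := hlog0 t
    nlinarith
  have hZhi : ∀ t ≥ 0, Z t ≤ z1 := by
    intro t ht
    rw [hz1, ← Real.log_le_iff_le_exp (hZ0 t), le_div_iff₀ (by positivity)]
    have h1 := hFle t
    have h2 := hmono ht
    have h3 := hlog2 t
    nlinarith
  -- bound on S
  set s1 := max (S 0) (b * z1 / a + 1) with hs1
  have hShi : ∀ t ≥ 0, S t ≤ s1 := by
    intro t ht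
    refine image_le_of_deriv_right_lt_deriv_boundary (f := S)
      (f' := fun t => (1 + S t ^ 2) * (b * Z t - a * S t)) (a := 0) (b := t)
      (B := fun _ => s1) (B' := fun _ => 0)
      (fun x _ => (hS x).continuousAt.continuousWithinAt)
      (fun x _ => (hS x).hasDerivWithinAt) (le_max_left _ _) (fun x => hasDerivAt_const _ _)
      ?_ ⟨ht, le_rfl⟩
    intro x hx hxs
    have h1 : b * z1 / a + 1 ≤ S x := by rw [hxs]; exact le_max_right _ _
    have h2 := hZhi x hx.1
    apply mul_neg_of_pos_of_neg (by positivity)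
    have h3 : a * (b * z1 / a + 1) ≤ a * S x := by gcongr
    have h4 : a * (b * z1 / a + 1) = b * z1 + a := by field_simp
    have h5 : b * Z x ≤ b * z1 := by gcongr
    linarith
  have hs1p : 0 ≤ s1 := (hS0 0).trans (le_max_left _ _)
  set A : Set (ℝ × ℝ) := Set.Icc z0 z1 ×ˢ Set.Icc 0 s1 with hA
  have hAc : IsCompact A := isCompact_Icc.prod isCompact_Icc
  have hZSA : ∀ t ≥ 0, (Z t, S t) ∈ A := fun t ht =>
    ⟨⟨hZlo t ht, hZhi t ht⟩, ⟨hS0 t, hShi t ht⟩⟩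
  obtain ⟨K1, hK1⟩ := hAc.exists_bound_of_continuousOn
    (f := fun x : ℝ × ℝ => x.1 - x.1 ^ 2 * x.2) (by fun_prop)
  obtain ⟨K2, hK2⟩ := hAc.exists_bound_of_continuousOn
    (f := fun x : ℝ × ℝ => (1 + x.2 ^ 2) * (b * x.1 - a * x.2)) (by fun_prop)
  have hZK : ∀ t ≥ 0, |Z t - Z t ^ 2 * S t| ≤ max K1 K2 := fun t ht =>
    (hK1 _ (hZSA t ht)).trans (le_max_left _ _)
  have hSK : ∀ t ≥ 0, |(1 + S t ^ 2) * (b * Z t - a * S t)| ≤ max K1 K2 := fun t ht =>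
    (hK2 _ (hZSA t ht)).trans (le_max_right _ _)
  have hΦc : ContinuousOn Φ A := by
    intro x hx
    have h1 : 0 < x.1 := lt_of_lt_of_le hz0p hx.1.1
    have h2 : 0 ≤ x.2 := hx.2.1
    have h3 : (x.1 + x.2) * (1 + x.1 ^ 2) ≠ 0 := by positivity
    apply ContinuousAt.continuousWithinAt
    simp only [hΦ]
    fun_prop (disch := assumption)
  have hΦlim := wiggly_barbalat_path hAc hZSA hZ hS hZK hSK hΦc (fun t _ => hFd t) hL
  -- e = z s - 1 → 0
  have he2 : Tendsto (fun t => (Z t * S t - 1) ^ 2) atTop (nhds 0) := by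
    set c := (z1 + s1) * (1 + z1 ^ 2) / (2 * (a + b + 1) * z0) with hc
    have : Tendsto (fun t => c * Φ (Z t, S t)) atTop (nhds 0) := by
      simpa using hΦlim.const_mul c
    refine squeeze_zero' (Eventually.of_forall fun t => sq_nonneg _) ?_ this
    filter_upwards [eventually_ge_atTop 0] with t ht
    have hz := hZ0 t
    have hs := hS0 t
    have e1 : (Z t * S t - 1) ^ 2 =
        ((Z t + S t) * (1 + Z t ^ 2) / (2 * (a + b + 1) * Z t)) * Φ (Z t, S t) := by
      simp only [hΦ]
      have : Z t + S t ≠ 0 := by positivity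
      field_simp
    rw [e1]
    have := hΦ0 t
    have h1 := hZlo t ht
    have h2 := hZhi t ht
    have h3 := hShi t ht
    rw [hc]
    gcongr
  have he : Tendsto (fun t => Z t * S t - 1) atTop (nhds 0) := by
    have := he2.sqrt
    simp only [Real.sqrt_sq_eq_abs, Real.sqrt_zero] at this
    exact (tendsto_zero_iff_abs_tendsto_zero _).2 this
  set Ψ : ℝ × ℝ → ℝ := fun x => (x.1 - x.1 ^ 2 * x.2) * x.2 +
    x.1 * ((1 + x.2 ^ 2) * (b * x.1 - a * x.2)) with hΨ
  have hed : ∀ t ≥ 0, HasDerivAt (fun t => Z t * S t - 1) (Ψ (Z t, S t)) t := fun t _ =>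
    ((hZ t).mul (hS t)).sub_const 1
  have hΨc : ContinuousOn Ψ A := by
    simp only [hΨ]; fun_prop
  have hΨlim := wiggly_barbalat_path hAc hZSA hZ hS hZK hSK hΨc hed he
  -- b z - a s → 0
  have hg : Tendsto (fun t => b * Z t - a * S t) atTop (nhds 0) := by
    have h1 : Tendsto (fun t => Ψ (Z t, S t) + (Z t * S t - 1) * (Z t * S t - 1 + 1))
        atTop (nhds 0) := by
      simpa using hΨlim.add (he.mul (he.add_const 1))
    have h2 := (tendsto_zero_iff_abs_tendsto_zero _).1 h1
    have h3 := h2.const_mul (1 / z0)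
    rw [mul_zero] at h3
    refine squeeze_zero_norm' ?_ h3
    filter_upwards [eventually_ge_atTop 0] with t ht
    have hz := hZ0 t
    have e1 : Ψ (Z t, S t) + (Z t * S t - 1) * (Z t * S t - 1 + 1) =
        Z t * (1 + S t ^ 2) * (b * Z t - a * S t) := by
      simp only [hΨ]; ring
    simp only [Function.comp]
    rw [e1, abs_mul, Real.norm_eq_abs, abs_of_pos (by positivity : 0 < Z t * (1 + S t ^ 2)),
      ← mul_assoc]
    refine le_mul_of_one_le_left (abs_nonneg _) ?_
    have h1 := hZlo t ht
    rw [one_div, ← div_eq_inv_mul, le_div_iff₀ hz0p]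
    nlinarith [mul_nonneg hz.le (sq_nonneg (S t))]
  have hZb : ∀ᶠ t in atTop, ‖Z t‖ ≤ z1 := by
    filter_upwards [eventually_ge_atTop 0] with t ht
    rw [Real.norm_eq_abs, abs_of_pos (hZ0 t)]; exact hZhi t ht
  have hzg : Tendsto (fun t => Z t * (b * Z t - a * S t)) atTop (nhds 0) := by
    have h2 := (((tendsto_zero_iff_abs_tendsto_zero _).1 hg).const_mul z1)
    rw [mul_zero] at h2
    refine squeeze_zero_norm' ?_ h2
    filter_upwards [hZb] with t ht
    rw [norm_mul]
    exact mul_le_mul_of_nonneg_right ht (abs_nonneg _)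
  have hz2 : Tendsto (fun t => Z t ^ 2) atTop (nhds (a / b)) := by
    have := ((hzg.add (he.const_mul a)).add_const a).div_const b
    simp only [mul_zero, zero_add] at this
    refine this.congr fun t => ?_
    field_simp
    ring
  have hzlim : Tendsto Z atTop (nhds (√(a / b))) := by
    refine hz2.sqrt.congr fun t => ?_
    exact Real.sqrt_sq (hZ0 t).le
  refine ⟨hzlim, ?_⟩
  have := ((hzlim.const_mul b).sub hg).div_const a
  have e : (b * √(a / b) - 0) / a = √(b / a) := by
    rw [sub_zero, Real.sqrt_div ha.le, Real.sqrt_div hb.le]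
    have h1 := Real.sq_sqrt ha.le
    have h2 := Real.sq_sqrt hb.le
    have h3 : 0 < √a := by positivity
    have h4 : 0 < √b := by positivity
    rw [div_eq_div_iff ha.ne' h3.ne', mul_div_assoc', div_mul_eq_mul_div, div_eq_iff h4.ne']
    nlinarith
  rw [e] at this
  refine this.congr fun t => ?_
  field_simp
  ring

end WigglyLimit

section WigglyOsc

lemma wiggly_riccati {Y c β : ℝ → ℝ} {m : ℝ} (hm2 : 2 ≤ m) (hm5 : m ≤ 5)
    (hc : Tendsto c atTop (nhds (m - 1))) (hβ : Tendsto β atTop (nhds m)) (T : ℝ)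
    (hY : ∀ t ≥ T, HasDerivAt Y (-(Y t ^ 2 + c t * Y t + β t)) t) : False := by
  have h1 : Tendsto (fun t => 3.8 * (β t - 0.05) - c t ^ 2) atTop
      (nhds (3.8 * (m - 0.05) - (m - 1) ^ 2)) :=
    ((hβ.sub_const _).const_mul _).sub (hc.pow 2)
  have h2 : 0 < 3.8 * (m - 0.05) - (m - 1) ^ 2 := by nlinarith
  obtain ⟨N, hN⟩ := eventually_atTop.1 (h1.eventually (lt_mem_nhds h2))
  set T0 := max N T with hT0
  have hd : ∀ t ≥ T0, HasDerivAt (fun t => arctan (Y t))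
      (1 / (1 + Y t ^ 2) * (-(Y t ^ 2 + c t * Y t + β t))) t := fun t ht =>
    (hY t (le_trans (le_max_right _ _) ht)).arctan
  have hlt : T0 < T0 + 100 := by linarith
  obtain ⟨x, hx, hxd⟩ := exists_hasDerivAt_eq_slope (fun t => arctan (Y t)) _ hlt
    (fun x hx => (hd x hx.1).continuousAt.continuousWithinAt)
    (fun x hx => hd x hx.1.le)
  have h3 := hN x (le_trans (le_max_left _ _) hx.1.le)
  have h4 : 1 / (1 + Y x ^ 2) * (-(Y x ^ 2 + c x * Y x + β x)) ≤ -(1 / 20) := by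
    rw [one_div_mul_eq_div, div_le_iff₀ (by positivity)]
    nlinarith [sq_nonneg (1.9 * Y x + c x)]
  rw [hxd, add_sub_cancel_left, div_le_iff₀ (by norm_num)] at h4
  have h5 := neg_pi_div_two_lt_arctan (Y (T0 + 100))
  have h6 := arctan_lt_pi_div_two (Y T0)
  have h7 := pi_lt_four
  linarith

end WigglyOsc

/-- The 'wiggly companion': for `4 ≤ p + q ≤ 7` there is a smooth rotationally symmetric
minimal surface profile `v` with `v(0) = 1`, `v′(0) = 0`, solving the minimal surface ODE,
asymptotic to the cone slope `λ_s = √((q−1)/(p−1))` at infinity, and crossing the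
line `u = λ_s r` infinitely many times. -/
theorem wiggly_companion_exists (p q : ℕ) (hp : 2 ≤ p) (hq : 2 ≤ q)
    (hn4 : 4 ≤ p + q) (hn7 : p + q ≤ 7)
    (lam : ℝ) (hlam : lam = Real.sqrt (((q : ℝ) - 1) / ((p : ℝ) - 1))) :
    ∃ v v' : ℝ → ℝ,
      (∀ r ≥ (0 : ℝ), 0 < v r) ∧
      ContinuousOn v (Set.Ici 0) ∧
      ContDiffOn ℝ 2 v (Set.Ioi 0) ∧
      v 0 = 1 ∧
      ContinuousOn v' (Set.Ici 0) ∧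
      v' 0 = 0 ∧
      (∀ r > (0 : ℝ), HasDerivAt v (v' r) r) ∧
      (∀ r > (0 : ℝ),
          deriv v' r / (1 + (v' r) ^ 2)
            + (((p : ℝ) - 1) / r) * v' r - ((q : ℝ) - 1) / v r = 0) ∧
      Tendsto (fun r => v r / r) atTop (nhds lam) ∧
      Tendsto v' atTop (nhds lam) ∧
      {r : ℝ | 0 < r ∧ v r = lam * r}.Infinite := by
  have hp' : (2:ℝ) ≤ p := by exact_mod_cast hp
  have hq' : (2:ℝ) ≤ q := by exact_mod_cast hq
  have hpq' : (p:ℝ) + q ≤ 7 := by exact_mod_cast hn7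
  obtain ⟨a, ha⟩ : ∃ a : ℝ, a = (p:ℝ) - 1 := ⟨_, rfl⟩
  obtain ⟨b, hb⟩ : ∃ b : ℝ, b = (q:ℝ) - 1 := ⟨_, rfl⟩
  rw [← ha, ← hb] at hlam ⊢
  have ha0 : 0 < a := by linarith
  have hb0 : 0 < b := by linarith
  have hlam0 : 0 < lam := by rw [hlam]; positivity
  have hlam2 : a * lam ^ 2 = b := by
    rw [hlam, Real.sq_sqrt (by positivity)]; field_simp
  obtain ⟨v, s, hvc, hsc, hv0, hs0, hv1, hspos, hvd, hsd⟩ :=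
    wiggly_profile (p - 1) (a := a) (b := b) ha0
      (by rw [ha, Nat.cast_sub (by omega)]; simp) hb0
  have hvp : ∀ r, 0 < v r := fun r => lt_of_lt_of_le one_pos (hv1 r)
  -- logarithmic variables
  have hexp : ∀ t : ℝ, 0 < exp t := exp_pos
  have hVe : ∀ t, HasDerivAt (fun t => v (exp t)) (s (exp t) * exp t) t := fun t =>
    HasDerivAt.comp t (hvd _ (hexp t)) (Real.hasDerivAt_exp t)
  set Z : ℝ → ℝ := fun t => exp t / v (exp t) with hZdef
  set S : ℝ → ℝ := fun t => s (exp t) with hSdef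
  have hZ0 : ∀ t, 0 < Z t := fun t => div_pos (hexp t) (hvp _)
  have hZ : ∀ t, HasDerivAt Z (Z t - Z t ^ 2 * S t) t := by
    intro t
    refine ((Real.hasDerivAt_exp t).div (hVe t) (hvp _).ne').congr_deriv ?_
    have := (hvp (exp t)).ne'
    simp only [hZdef, hSdef]
    field_simp
  have hS : ∀ t, HasDerivAt S ((1 + S t ^ 2) * (b * Z t - a * S t)) t := by
    intro t
    refine (HasDerivAt.comp t (hsd _ (hexp t)) (Real.hasDerivAt_exp t)).congr_deriv ?_
    have := (hvp (exp t)).ne'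
    simp only [hZdef, hSdef]
    field_simp
  obtain ⟨hZl, hSl⟩ := wiggly_limit ha0 hb0 hZ hS hZ0 (fun t => hspos _ (hexp t).le)
  rw [← hlam] at hSl
  have hZl' : Tendsto Z atTop (nhds lam⁻¹) := by
    rwa [hlam, ← Real.sqrt_inv, inv_div]
  have hslim : Tendsto s atTop (nhds lam) := by
    refine (hSl.comp tendsto_log_atTop).congr' ?_
    filter_upwards [eventually_gt_atTop 0] with r hr
    simp only [hSdef, Function.comp, exp_log hr]
  have hvlim : Tendsto (fun r => v r / r) atTop (nhds lam) := by
    have := (hZl'.comp tendsto_log_atTop).inv₀ (inv_ne_zero hlam0.ne')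
    rw [inv_inv] at this
    refine this.congr' ?_
    filter_upwards [eventually_gt_atTop 0] with r hr
    simp only [hZdef, Function.comp, exp_log hr, inv_div]
  refine ⟨v, s, fun r _ => hvp r, hvc.continuousOn, ?_, hv0, hsc.continuousOn, hs0, hvd, ?_,
    hvlim, hslim, ?_⟩
  · rw [show (2 : WithTop ℕ∞) = 1 + 1 from by norm_num,
      contDiffOn_succ_iff_deriv_of_isOpen isOpen_Ioi]
    refine ⟨fun r hr => (hvd r hr).differentiableAt.differentiableWithinAt, by simp, ?_⟩
    have h1 : ContDiffOn ℝ 1 s (Set.Ioi 0) := by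
      rw [show (1 : WithTop ℕ∞) = 0 + 1 from by norm_num,
        contDiffOn_succ_iff_deriv_of_isOpen isOpen_Ioi]
      refine ⟨fun r hr => (hsd r hr).differentiableAt.differentiableWithinAt, by simp, ?_⟩
      rw [contDiffOn_zero]
      have h2 : ContinuousOn (fun r => (1 + s r ^ 2) * (b / v r - a * s r / r)) (Set.Ioi 0) := by
        intro r hr
        have h3 : v r ≠ 0 := (hvp r).ne'
        have h4 : r ≠ 0 := ne_of_gt hr
        apply ContinuousAt.continuousWithinAt
        fun_prop (disch := assumption)
      exact h2.congr fun r hr => (hsd r hr).deriv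
    exact h1.congr fun r hr => (hvd r hr).deriv
  · intro r hr
    rw [(hsd r hr).deriv]
    have h3 : v r ≠ 0 := (hvp r).ne'
    field_simp
    ring
  · intro hfin
    obtain ⟨R, hR⟩ := hfin.bddAbove
    have hne : ∀ r, max R 0 < r → v r - lam * r ≠ 0 := by
      intro r hr h
      have h1 : r ≤ R := hR ⟨lt_of_le_of_lt (le_max_right _ _) hr, by linarith⟩
      linarith [le_max_left R 0]
    obtain ⟨T, hT⟩ := eventually_atTop.1 (tendsto_exp_atTop.eventually_gt_atTop (max R 0))
    refine wiggly_riccati (m := a + b) (Y := fun t => exp t * (S t - lam) / (v (exp t) - lam * exp t))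
      (c := fun t => a * (1 + S t ^ 2) - 1) (β := fun t => (1 + S t ^ 2) * (b * Z t / lam))
      (by linarith) (by linarith) ?_ ?_ T ?_
    · have : a + b - 1 = a * (1 + lam ^ 2) - 1 := by rw [← hlam2]; ring
      rw [this]
      exact (((hSl.pow 2).const_add 1).const_mul a).sub_const 1
    · have : a + b = (1 + lam ^ 2) * (b * lam⁻¹ / lam) := by
        rw [← hlam2]; field_simp
      rw [this]
      exact ((hSl.pow 2).const_add 1).mul ((hZl'.const_mul b).div_const lam)
    · intro t ht
      have hD := hne _ (hT t ht)
      have hvt := (hvp (exp t)).ne'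
      have h1 := ((Real.hasDerivAt_exp t).mul ((hS t).sub_const lam)).div
        ((hVe t).sub ((Real.hasDerivAt_exp t).const_mul lam)) hD
      refine h1.congr_deriv ?_
      simp only [Pi.mul_apply, Pi.sub_apply, hZdef, hSdef]
      generalize s (exp t) = σ at *
      have hE := (hexp t).ne'
      generalize exp t = E at *
      generalize v E = w at *
      clear h1
      obtain ⟨D, hDw⟩ : ∃ D, D = w - lam * E := ⟨_, rfl⟩
      rw [← hDw] at hD ⊢
      rw [← hlam2]
      field_simp
      rw [hDw]
      ring
end

section
/- Let p, q ≥ 2 be integers. For every a > 0 there exist a function u_a : [0, ∞) → (0, ∞), continuous on [0, ∞) and C² on (0, ∞), and a real number λ(a) ∈ (0, ∞), such that: u_a(0) = a; u_a′ extends continuously to 0 with u_a′(0) = 0; u_a solves the self-expander ODE u″/(1+u′²) + ((p−1)/r + r/2)·u′ − u/2 − (q−1)/u = 0 on (0, ∞); and u_a(r)/r → λ(a) and u_a′(r) → λ(a) as r → ∞. -/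
open Real Filter

namespace SE

lemma weighted_fixed (K : ℝ → ℝ) (hK : Continuous K) (A : (ℝ → ℝ) → ℝ → ℝ)
    (hc : ∀ x, Continuous x → ContinuousOn (A x) (Set.Ici 0))
    (C : ℝ) (h0 : ∀ r ≥ (0:ℝ), |A (fun _ => 0) r| ≤ C * exp (K r))
    (hA : ∀ x y D, Continuous x → Continuous y → 0 ≤ D →
      (∀ s ≥ (0:ℝ), |x s - y s| ≤ D * exp (K s)) →
      ∀ r ≥ (0:ℝ), |A x r - A y r| ≤ D / 2 * exp (K r)) :
    ∃ x : ℝ → ℝ, Continuous x ∧ ∀ r ≥ (0:ℝ), A x r = x r := by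
  have hpos : ∀ r : ℝ, (0:ℝ) ≤ max r 0 := fun r => le_max_right _ _
  let X : (BoundedContinuousFunction ℝ ℝ) → ℝ → ℝ := fun ξ r => exp (K r) * ξ r
  have hX : ∀ ξ, Continuous (X ξ) := fun ξ => by
    have := ξ.continuous
    exact (Real.continuous_exp.comp hK).mul this
  have hXd : ∀ ξ η : BoundedContinuousFunction ℝ ℝ, ∀ s, |X ξ s - X η s| ≤ dist ξ η * exp (K s) := by
    intro ξ η s
    have h1 := BoundedContinuousFunction.dist_coe_le_dist (f := ξ) (g := η) s
    rw [Real.dist_eq] at h1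
    simp only [X]
    rw [← mul_sub, abs_mul, abs_of_pos (exp_pos _), mul_comm]
    exact mul_le_mul_of_nonneg_right h1 (exp_pos _).le
  have hX0 : X 0 = fun _ => 0 := by
    funext r; simp [X]
  let f : BoundedContinuousFunction ℝ ℝ → ℝ → ℝ :=
    fun ξ r => exp (-K (max r 0)) * A (X ξ) (max r 0)
  have hfc : ∀ ξ, Continuous (f ξ) := by
    intro ξ
    have hm : Continuous fun r : ℝ => max r 0 := by fun_prop
    exact (Real.continuous_exp.comp (hK.comp hm).neg).mul
      ((hc _ (hX ξ)).comp_continuous hm hpos)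
  have hfd : ∀ ξ η, ∀ r, |f ξ r - f η r| ≤ dist ξ η / 2 := by
    intro ξ η r
    have := hA (X ξ) (X η) (dist ξ η) (hX _) (hX _) dist_nonneg (fun s _ => hXd ξ η s) _ (hpos r)
    simp only [f]
    rw [← mul_sub, abs_mul, abs_of_pos (exp_pos _)]
    calc _ ≤ exp (-K (max r 0)) * (dist ξ η / 2 * exp (K (max r 0))) :=
          mul_le_mul_of_nonneg_left this (exp_pos _).le
      _ = dist ξ η / 2 * (exp (-K (max r 0)) * exp (K (max r 0))) := by ring
      _ = _ := by rw [← exp_add]; simp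
  have hf0 : ∀ r, |f 0 r| ≤ C := by
    intro r
    have := h0 _ (hpos r)
    simp only [f, hX0]
    rw [abs_mul, abs_of_pos (exp_pos _)]
    calc _ ≤ exp (-K (max r 0)) * (C * exp (K (max r 0))) :=
          mul_le_mul_of_nonneg_left this (exp_pos _).le
      _ = C * (exp (-K (max r 0)) * exp (K (max r 0))) := by ring
      _ = _ := by rw [← exp_add]; simp
  let F : BoundedContinuousFunction ℝ ℝ → BoundedContinuousFunction ℝ ℝ := fun ξ =>
    BoundedContinuousFunction.ofNormedAddCommGroup (f ξ) (hfc ξ) (dist ξ 0 / 2 + C) (by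
      intro r
      rw [Real.norm_eq_abs]
      have h1 := hfd ξ 0 r
      have h2 := hf0 r
      calc |f ξ r| = |(f ξ r - f 0 r) + f 0 r| := by ring_nf
        _ ≤ _ := (abs_add_le _ _).trans (add_le_add h1 h2))
  have hF : ContractingWith (1/2 : NNReal) F := by
    refine ⟨by norm_num, LipschitzWith.of_dist_le_mul ?_⟩
    intro ξ η
    refine (BoundedContinuousFunction.dist_le (by positivity)).2 ?_
    intro r
    rw [Real.dist_eq]
    have := hfd ξ η r
    simp only [F, BoundedContinuousFunction.coe_ofNormedAddCommGroup]
    push_cast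
    linarith
  let ξ := hF.fixedPoint
  have hξ : F ξ = ξ := hF.fixedPoint_isFixedPt
  refine ⟨X ξ, hX ξ, fun r hr => ?_⟩
  have h1 : F ξ r = ξ r := by rw [hξ]
  have h2 : F ξ r = exp (-K r) * A (X ξ) r := by
    simp only [F, BoundedContinuousFunction.coe_ofNormedAddCommGroup, f, max_eq_left hr]
  simp only [X]
  rw [← h1, h2, ← mul_assoc, ← exp_add]
  simp [X]

/-- Lipschitz bounds for the trigonometric conversions. -/
lemma lip_aux (s t B : ℝ) (hs : 0 ≤ s) (ht : 0 ≤ t) (hB : 1 ≤ B) (hs1 : 1 / B ≤ 1 - s ^ 2)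
    (ht1 : 1 / B ≤ 1 - t ^ 2) :
    |√(1 - s ^ 2) - √(1 - t ^ 2)| ≤ B * |s - t| ∧
    |s / √(1 - s ^ 2) - t / √(1 - t ^ 2)| ≤ 2 * B ^ 2 * |s - t| := by
  have hB0 : 0 < B := by linarith
  have key : ∀ z : ℝ, 0 ≤ z → 1 / B ≤ 1 - z ^ 2 → z ≤ 1 ∧ 1 / B ≤ √(1 - z ^ 2) ∧ √(1 - z^2) ≤ 1 ∧
      √(1 - z ^ 2) ^ 2 = 1 - z ^ 2 := by
    intro z hz h
    have hb : 0 < 1 / B := by positivity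
    have hb1 : 1 / B ≤ 1 := by rw [div_le_one hB0]; exact hB
    refine ⟨by nlinarith, ?_, ?_, Real.sq_sqrt (by linarith)⟩
    · apply Real.le_sqrt_of_sq_le
      nlinarith
    · rw [Real.sqrt_le_left (by norm_num)]; nlinarith
  obtain ⟨hs2, hs3, hs4, hs5⟩ := key s hs hs1
  obtain ⟨ht2, ht3, ht4, ht5⟩ := key t ht ht1
  set S := √(1 - s ^ 2)
  set T := √(1 - t ^ 2)
  have hb : 0 < 1 / B := by positivity
  have hS : 0 < S := by linarith
  have hT : 0 < T := by linarith
  have e1 : |S - T| * (S + T) = |s - t| * (s + t) := by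
    rw [← abs_of_pos (show 0 < S + T by linarith), ← abs_mul]
    have : (S - T) * (S + T) = (t - s) * (s + t) := by nlinarith
    rw [this, abs_mul, abs_sub_comm t s, abs_of_nonneg (show 0 ≤ s + t by linarith)]
  have hB1 : B * (1 / B) = 1 := by field_simp
  have c1 : |S - T| ≤ B * |s - t| := by
    have h1 : |S - T| * (2 * (1 / B)) ≤ |s - t| * 2 := by
      calc _ ≤ |S - T| * (S + T) := mul_le_mul_of_nonneg_left (by linarith) (abs_nonneg _)
        _ = _ := e1
        _ ≤ _ := mul_le_mul_of_nonneg_left (by linarith) (abs_nonneg _)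
    have h2 : |S - T| * (1 / B) ≤ |s - t| := by linarith
    calc |S - T| = B * (|S - T| * (1 / B)) := by field_simp
      _ ≤ _ := mul_le_mul_of_nonneg_left h2 hB0.le
  refine ⟨c1, ?_⟩
  have iS : 1 / S ≤ B := by
    rw [div_le_iff₀ hS]; nlinarith
  have e2 : s / S - t / T = (s - t) / S + t * ((T - S) * (1 / (S * T))) := by
    field_simp; ring
  have iST : 1 / (S * T) ≤ B := by
    have h3 : 1 / B ≤ S ^ 2 := by linarith
    have h4 : 1 / B ≤ T ^ 2 := by linarith
    have h5 : 1 / B ≤ S * T := by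
      rcases le_total S T with h | h <;> nlinarith
    rw [div_le_iff₀ (by positivity)]
    nlinarith
  rw [e2]
  have d1 : |(s - t) / S| ≤ B * |s - t| := by
    rw [abs_div, abs_of_pos hS, div_eq_mul_one_div, mul_comm]
    exact mul_le_mul_of_nonneg_right iS (abs_nonneg _)
  have d2 : |t * ((T - S) * (1 / (S * T)))| ≤ B * |s - t| * B := by
    have hp : 0 < 1 / (S * T) := by positivity
    rw [abs_mul, abs_mul, abs_of_nonneg ht, abs_of_pos hp, abs_sub_comm]
    calc _ ≤ 1 * (|S - T| * (1 / (S * T))) := mul_le_mul_of_nonneg_right ht2 (by positivity)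
      _ = |S - T| * (1 / (S * T)) := one_mul _
      _ ≤ _ := mul_le_mul c1 iST hp.le (by positivity)
  have d3 : B * |s - t| ≤ B ^ 2 * |s - t| := by
    apply mul_le_mul_of_nonneg_right _ (abs_nonneg _); nlinarith
  calc _ ≤ _ := abs_add_le _ _
    _ ≤ B * |s - t| + B * |s - t| * B := add_le_add d1 d2
    _ ≤ _ := by nlinarith

/-- The integrating factor. -/
noncomputable def Phi (n : ℕ) (r : ℝ) : ℝ := r ^ n * exp (r ^ 2 / 4)

lemma Phi_cont (n : ℕ) : Continuous (Phi n) := by unfold Phi; fun_prop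

lemma Phi_pos (n : ℕ) {r : ℝ} (hr : 0 < r) : 0 < Phi n r := by unfold Phi; positivity

lemma Phi_nonneg (n : ℕ) {r : ℝ} (hr : 0 ≤ r) : 0 ≤ Phi n r := by unfold Phi; positivity

lemma Phi_mono (n : ℕ) {s r : ℝ} (hs : 0 ≤ s) (hsr : s ≤ r) : Phi n s ≤ Phi n r := by
  have := hs.trans hsr
  unfold Phi; gcongr

/-- The singular Volterra average. -/
noncomputable def Av (n : ℕ) (g : ℝ → ℝ) (r : ℝ) : ℝ :=
  (Phi n r)⁻¹ * ∫ s in (0:ℝ)..r, Phi n s * g s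

lemma Av_bound (n : ℕ) (g G : ℝ → ℝ) (hg : Continuous g) (hG : Continuous G)
    (r : ℝ) (hr : 0 ≤ r) (h : ∀ s, 0 ≤ s → s ≤ r → |g s| ≤ G s) :
    |Av n g r| ≤ ∫ s in (0:ℝ)..r, G s := by
  rcases hr.eq_or_lt with rfl | hr
  · simp [Av]
  have hP := Phi_pos n hr
  have hc := Phi_cont n
  unfold Av
  rw [abs_mul, abs_of_pos (inv_pos.2 hP), inv_mul_le_iff₀ hP]
  have h1 : |∫ s in (0:ℝ)..r, Phi n s * g s| ≤ ∫ s in (0:ℝ)..r, |Phi n s * g s| :=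
    intervalIntegral.abs_integral_le_integral_abs hr.le
  refine h1.trans ?_
  rw [← intervalIntegral.integral_const_mul]
  apply intervalIntegral.integral_mono_on hr.le
  · exact (hc.mul hg).abs.intervalIntegrable _ _
  · exact (continuous_const.mul hG).intervalIntegrable _ _
  · intro s hs
    rw [abs_mul, abs_of_nonneg (Phi_nonneg n hs.1)]
    exact mul_le_mul (Phi_mono n hs.1 hs.2) (h s hs.1 hs.2) (abs_nonneg _) hP.le

lemma Av_sub (n : ℕ) (g k : ℝ → ℝ) (hg : Continuous g) (hk : Continuous k) (r : ℝ) :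
    Av n g r - Av n k r = Av n (fun s => g s - k s) r := by
  have hc := Phi_cont n
  unfold Av
  rw [← mul_sub, ← intervalIntegral.integral_sub]
  · simp only [mul_sub]
  · exact (hc.mul hg).intervalIntegrable _ _
  · exact (hc.mul hk).intervalIntegrable _ _

lemma Av_zero (n : ℕ) (g : ℝ → ℝ) : Av n g 0 = 0 := by simp [Av]

lemma Phi_deriv (n : ℕ) {r : ℝ} (hr : 0 < r) :
    HasDerivAt (Phi n) (Phi n r * (n / r + r / 2)) r := by
  have h1 : HasDerivAt (fun r : ℝ => r ^ n) (n * r ^ (n - 1)) r := hasDerivAt_pow n r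
  have h2 : HasDerivAt (fun r : ℝ => exp (r ^ 2 / 4)) (exp (r ^ 2 / 4) * (2 * r / 4)) r := by
    have := ((hasDerivAt_pow 2 r).div_const 4).exp
    simpa using this
  have h3 := h1.mul h2
  refine h3.congr_deriv ?_
  unfold Phi
  rcases n with _ | n
  · simp; ring
  · simp only [Nat.add_sub_cancel, pow_succ]
    field_simp
    ring

lemma Av_deriv (n : ℕ) (g : ℝ → ℝ) (hg : Continuous g) {r : ℝ} (hr : 0 < r) :
    HasDerivAt (Av n g) (g r - (n / r + r / 2) * Av n g r) r := by
  have hP := Phi_pos n hr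
  have hc := Phi_cont n
  have h1 : HasDerivAt (fun r => ∫ s in (0:ℝ)..r, Phi n s * g s) (Phi n r * g r) r :=
    ((hc.mul hg).integral_hasStrictDerivAt 0 r).hasDerivAt
  have h2 := ((Phi_deriv n hr).inv hP.ne').mul h1
  refine h2.congr_deriv ?_
  unfold Av
  simp only [Pi.inv_apply]
  field_simp
  ring

lemma Av_cont (n : ℕ) (g : ℝ → ℝ) (hg : Continuous g) : ContinuousOn (Av n g) (Set.Ici 0) := by
  intro r hr
  rcases (show (0:ℝ) ≤ r from hr).eq_or_lt with rfl | hr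
  · unfold ContinuousWithinAt
    rw [Av_zero]
    have h1 : Tendsto (fun r => ∫ s in (0:ℝ)..r, |g s|) (nhdsWithin 0 (Set.Ici 0)) (nhds 0) := by
      have : Continuous fun r => ∫ s in (0:ℝ)..r, |g s| :=
        intervalIntegral.continuous_primitive (fun a b => hg.abs.intervalIntegrable a b) 0
      have h2 := this.tendsto 0
      rw [intervalIntegral.integral_same] at h2
      exact h2.mono_left nhdsWithin_le_nhds
    apply squeeze_zero_norm' _ h1
    filter_upwards [self_mem_nhdsWithin] with r hr
    exact Av_bound n g _ hg hg.abs r hr (fun s _ _ => le_rfl)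
  · exact (Av_deriv n g hg hr).continuousAt.continuousWithinAt

end SE
namespace SE

noncomputable def W (m r : ℝ) : ℝ := m * r / √(1 + m ^ 2 * r ^ 2)

noncomputable def tau (m r w : ℝ) : ℝ := max 0 (min w (W m r))

noncomputable def Cc (m r w : ℝ) : ℝ := √(1 - tau m r w ^ 2)

noncomputable def Vv (m r w : ℝ) : ℝ := tau m r w / Cc m r w

noncomputable def hh (Q a y : ℝ) : ℝ := y / 2 + Q / max y a

lemma base_pos (m r : ℝ) : 0 < 1 + m ^ 2 * r ^ 2 := by positivity

lemma W_sq (m r : ℝ) : 1 - W m r ^ 2 = 1 / (1 + m ^ 2 * r ^ 2) := by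
  have := base_pos m r
  unfold W
  rw [div_pow, Real.sq_sqrt this.le]
  field_simp; ring

lemma W_cont (m : ℝ) : Continuous (W m) := by
  unfold W
  apply Continuous.div (by fun_prop) (by fun_prop)
  intro r
  exact (Real.sqrt_pos.2 (base_pos m r)).ne'

lemma W_nonneg {m r : ℝ} (hm : 0 ≤ m) (hr : 0 ≤ r) : 0 ≤ W m r := by
  unfold W; positivity

lemma tau_nonneg (m r w : ℝ) : 0 ≤ tau m r w := le_max_left _ _

lemma tau_sq (m r w : ℝ) : 1 / (1 + m ^ 2 * r ^ 2) ≤ 1 - tau m r w ^ 2 := by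
  have h1 := W_sq m r
  have h2 : tau m r w ≤ |W m r| :=
    max_le (abs_nonneg _) ((min_le_right _ _).trans (le_abs_self _))
  have h3 : tau m r w ^ 2 ≤ W m r ^ 2 := by
    rw [← sq_abs (W m r)]
    exact pow_le_pow_left₀ (tau_nonneg _ _ _) h2 2
  linarith

lemma tau_le {m r : ℝ} (w : ℝ) (hm : 0 ≤ m) (hr : 0 ≤ r) : tau m r w ≤ W m r :=
  max_le (W_nonneg hm hr) (min_le_right _ _)

lemma Cc_pos (m r w : ℝ) : 0 < Cc m r w := by
  have := base_pos m r
  have h := tau_sq m r w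
  exact Real.sqrt_pos.2 (lt_of_lt_of_le (by positivity) h)

lemma Cc_le (m r w : ℝ) : Cc m r w ≤ 1 := by
  unfold Cc
  rw [Real.sqrt_le_left (by norm_num)]
  nlinarith [sq_nonneg (tau m r w)]

lemma Vv_nonneg (m r w : ℝ) : 0 ≤ Vv m r w := div_nonneg (tau_nonneg _ _ _) (Cc_pos _ _ _).le

lemma Vv_le {m r : ℝ} (w : ℝ) (hm : 0 ≤ m) (hr : 0 ≤ r) : Vv m r w ≤ m * r := by
  have hb := base_pos m r
  have h := tau_sq m r w
  have ht := tau_nonneg m r w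
  have hC := Cc_pos m r w
  unfold Vv
  rw [div_le_iff₀ hC]
  apply le_of_sq_le_sq _ (by positivity)
  rw [mul_pow, Cc, Real.sq_sqrt (by linarith [show 0 < 1 / (1 + m ^ 2 * r ^ 2) by positivity])]
  rw [div_le_iff₀ hb] at h
  nlinarith

lemma tau_lip (m r w z : ℝ) : |tau m r w - tau m r z| ≤ |w - z| := by
  unfold tau
  have h1 := abs_max_sub_max_le_max 0 (min w (W m r)) 0 (min z (W m r))
  have h2 := abs_min_sub_min_le_max w (W m r) z (W m r)
  simp only [sub_self, abs_zero] at h1 h2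
  rw [max_eq_right (abs_nonneg (min w (W m r) - min z (W m r)))] at h1
  rw [max_eq_left (abs_nonneg (w - z))] at h2
  exact h1.trans h2

lemma CV_lip (m r w z : ℝ) :
    |Cc m r w - Cc m r z| ≤ (1 + m ^ 2 * r ^ 2) * |w - z| ∧
    |Vv m r w - Vv m r z| ≤ 2 * (1 + m ^ 2 * r ^ 2) ^ 2 * |w - z| := by
  have h := lip_aux (tau m r w) (tau m r z) (1 + m ^ 2 * r ^ 2) (tau_nonneg _ _ _)
    (tau_nonneg _ _ _) (by nlinarith [sq_nonneg (m * r)]) (tau_sq _ _ _) (tau_sq _ _ _)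
  have h2 := tau_lip m r w z
  exact ⟨h.1.trans (mul_le_mul_of_nonneg_left h2 (by positivity)),
    h.2.trans (mul_le_mul_of_nonneg_left h2 (by positivity))⟩

lemma tau_cont (m : ℝ) {x : ℝ → ℝ} (hx : Continuous x) : Continuous fun s => tau m s (x s) :=
  continuous_const.max (hx.min (W_cont m))

lemma Cc_cont (m : ℝ) {x : ℝ → ℝ} (hx : Continuous x) : Continuous fun s => Cc m s (x s) :=
  (continuous_const.sub ((tau_cont m hx).pow 2)).sqrt

lemma Vv_cont (m : ℝ) {x : ℝ → ℝ} (hx : Continuous x) : Continuous fun s => Vv m s (x s) :=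
  (tau_cont m hx).div (Cc_cont m hx) (fun _ => (Cc_pos _ _ _).ne')

lemma hh_cont (Q : ℝ) {a : ℝ} (ha : 0 < a) : Continuous (hh Q a) := by
  unfold hh
  apply Continuous.add (by fun_prop)
  apply Continuous.div continuous_const (by fun_prop)
  intro y
  exact (lt_of_lt_of_le ha (le_max_right _ _)).ne'

noncomputable def Uu (m a : ℝ) (x : ℝ → ℝ) (r : ℝ) : ℝ := a + ∫ s in (0:ℝ)..r, Vv m s (x s)

lemma Uu_deriv (m a : ℝ) {x : ℝ → ℝ} (hx : Continuous x) (r : ℝ) :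
    HasDerivAt (Uu m a x) (Vv m r (x r)) r :=
  (((Vv_cont m hx).integral_hasStrictDerivAt 0 r).hasDerivAt).const_add a

lemma Uu_cont (m a : ℝ) {x : ℝ → ℝ} (hx : Continuous x) : Continuous (Uu m a x) :=
  continuous_iff_continuousAt.2 fun r => (Uu_deriv m a hx r).continuousAt

lemma Uu_ge (m a : ℝ) (x : ℝ → ℝ) {r : ℝ} (hr : 0 ≤ r) : a ≤ Uu m a x r := by
  unfold Uu
  have := intervalIntegral.integral_nonneg (μ := MeasureTheory.volume) hr
    (fun s (_ : s ∈ Set.Icc 0 r) => Vv_nonneg m s (x s))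
  linarith

lemma Uu_le {m : ℝ} (a : ℝ) {x : ℝ → ℝ} (hx : Continuous x) {r : ℝ} (hm : 0 ≤ m) (hr : 0 ≤ r) :
    Uu m a x r ≤ a + m * r ^ 2 / 2 := by
  unfold Uu
  have h1 : ∫ s in (0:ℝ)..r, Vv m s (x s) ≤ ∫ s in (0:ℝ)..r, m * s := by
    apply intervalIntegral.integral_mono_on hr
    · exact (Vv_cont m hx).intervalIntegrable _ _
    · exact (continuous_const.mul continuous_id).intervalIntegrable _ _
    · intro s hs
      exact Vv_le _ hm hs.1
  rw [intervalIntegral.integral_const_mul, integral_id] at h1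
  nlinarith

lemma hh_le {Q a m y r : ℝ} (hQ : 0 < Q) (ha : 0 < a) (hm : m = a / 2 + Q / a)
    (hy : y ≤ a + m * r ^ 2 / 2) : hh Q a y ≤ m + m * r ^ 2 / 4 := by
  unfold hh
  have : Q / max y a ≤ Q / a := by
    apply div_le_div_of_nonneg_left hQ.le ha (le_max_right _ _)
  linarith

lemma hh_nonneg {Q a y : ℝ} (hQ : 0 < Q) (ha : 0 < a) (hy : a ≤ y) : 0 ≤ hh Q a y := by
  unfold hh
  have : 0 < max y a := lt_of_lt_of_le ha (le_max_right _ _)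
  have : 0 ≤ Q / max y a := by positivity
  linarith

lemma hh_lip {Q a y z : ℝ} (hQ : 0 < Q) (ha : 0 < a) (hy : a ≤ y) (hz : a ≤ z) :
    |hh Q a y - hh Q a z| ≤ (1 / 2 + Q / a ^ 2) * |y - z| := by
  unfold hh
  rw [max_eq_left hy, max_eq_left hz]
  have hy0 : 0 < y := by linarith
  have hz0 : 0 < z := by linarith
  have e : y / 2 + Q / y - (z / 2 + Q / z) = (1 / 2 - Q / (y * z)) * (y - z) := by
    field_simp; ring
  rw [e, abs_mul]
  apply mul_le_mul_of_nonneg_right _ (abs_nonneg _)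
  have h1 : Q / (y * z) ≤ Q / a ^ 2 := by
    apply div_le_div_of_nonneg_left hQ.le (by positivity)
    nlinarith
  have h2 : 0 < Q / (y * z) := by positivity
  rw [abs_le]; constructor <;> linarith

noncomputable def gg (m Q a : ℝ) (x : ℝ → ℝ) (s : ℝ) : ℝ := Cc m s (x s) * hh Q a (Uu m a x s)

lemma gg_cont (m Q : ℝ) {a : ℝ} (ha : 0 < a) {x : ℝ → ℝ} (hx : Continuous x) :
    Continuous (gg m Q a x) :=
  (Cc_cont m hx).mul ((hh_cont Q ha).comp (Uu_cont m a hx))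

/-- The weight rate. -/
noncomputable def ell (m Q a s : ℝ) : ℝ :=
  2 * (1 + m ^ 2 * s ^ 2) ^ 2
    + 2 * ((1 + m ^ 2 * s ^ 2) * (m + m * s ^ 2 / 4) + (1 / 2 + Q / a ^ 2))
    + (m + m * s ^ 2 / 4)

lemma ell_cont (m Q a : ℝ) : Continuous (ell m Q a) := by unfold ell; fun_prop

noncomputable def Kk (m Q a r : ℝ) : ℝ := ∫ s in (0:ℝ)..r, ell m Q a s

lemma Kk_deriv (m Q a r : ℝ) : HasDerivAt (Kk m Q a) (ell m Q a r) r :=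
  ((ell_cont m Q a).integral_hasStrictDerivAt 0 r).hasDerivAt

lemma Kk_cont (m Q a : ℝ) : Continuous (Kk m Q a) :=
  continuous_iff_continuousAt.2 fun r => (Kk_deriv m Q a r).continuousAt

lemma int_ell (m Q a r : ℝ) :
    ∫ s in (0:ℝ)..r, ell m Q a s * exp (Kk m Q a s) = exp (Kk m Q a r) - 1 := by
  have h : ∀ s ∈ Set.uIcc 0 r, HasDerivAt (fun s => exp (Kk m Q a s))
      (ell m Q a s * exp (Kk m Q a s)) s := by
    intro s _
    have := (Kk_deriv m Q a s).exp
    rwa [mul_comm] at this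
  rw [intervalIntegral.integral_eq_sub_of_hasDerivAt h]
  · simp [Kk]
  · exact ((ell_cont m Q a).mul
      (Real.continuous_exp.comp (Kk_cont m Q a))).intervalIntegrable _ _

lemma int_bound (m Q a r : ℝ) (hr : 0 ≤ r) (D : ℝ) (hD : 0 ≤ D) (f : ℝ → ℝ) (hf : Continuous f)
    (h : ∀ s, 0 ≤ s → f s ≤ D * (ell m Q a s * exp (Kk m Q a s))) :
    ∫ s in (0:ℝ)..r, f s ≤ D * exp (Kk m Q a r) := by
  have h1 : ∫ s in (0:ℝ)..r, f s ≤ ∫ s in (0:ℝ)..r, D * (ell m Q a s * exp (Kk m Q a s)) := by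
    apply intervalIntegral.integral_mono_on hr
    · exact hf.intervalIntegrable _ _
    · exact (continuous_const.mul ((ell_cont m Q a).mul
        (Real.continuous_exp.comp (Kk_cont m Q a)))).intervalIntegrable _ _
    · intro s hs
      exact h s hs.1
  rw [intervalIntegral.integral_const_mul, int_ell] at h1
  linarith

lemma exists_trunc (n : ℕ) (Q a m : ℝ) (hQ : 0 < Q) (ha : 0 < a) (hm : m = a / 2 + Q / a) :
    ∃ x : ℝ → ℝ, Continuous x ∧ ∀ r ≥ (0:ℝ), Av n (gg m Q a x) r = x r := by
  have hm0 : 0 < m := by rw [hm]; positivity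
  refine weighted_fixed (Kk m Q a) (Kk_cont m Q a) (fun x => Av n (gg m Q a x))
    (fun x hx => Av_cont n _ (gg_cont m Q ha hx)) 1 ?_ ?_
  · intro r hr
    have hx : Continuous (fun _ : ℝ => (0:ℝ)) := continuous_const
    have h1 := Av_bound n _ (ell m Q a) (gg_cont m Q ha hx) (ell_cont m Q a) r hr (by
      intro s hs _
      have c1 := Cc_pos m s 0
      have c2 := Cc_le m s 0
      have c3 := hh_nonneg hQ ha (Uu_ge m a (fun _ => 0) hs)
      have c4 := hh_le hQ ha hm (Uu_le a hx hm0.le hs)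
      unfold gg
      rw [abs_of_nonneg (mul_nonneg c1.le c3)]
      have c5 : m + m * s ^ 2 / 4 ≤ ell m Q a s := by
        unfold ell
        have : 0 ≤ 2 * (1 + m ^ 2 * s ^ 2) ^ 2
          + 2 * ((1 + m ^ 2 * s ^ 2) * (m + m * s ^ 2 / 4) + (1 / 2 + Q / a ^ 2)) := by positivity
        linarith
      nlinarith)
    have h2 : ∫ s in (0:ℝ)..r, ell m Q a s = Kk m Q a r := rfl
    have := Real.add_one_le_exp (Kk m Q a r)
    linarith
  · intro x y D hx hy hD hxy r hr
    have hU : ∀ s, 0 ≤ s → |Uu m a x s - Uu m a y s| ≤ D * exp (Kk m Q a s) := by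
      intro s hs
      have e : Uu m a x s - Uu m a y s = ∫ t in (0:ℝ)..s, (Vv m t (x t) - Vv m t (y t)) := by
        unfold Uu
        rw [intervalIntegral.integral_sub ((Vv_cont m hx).intervalIntegrable _ _)
          ((Vv_cont m hy).intervalIntegrable _ _)]
        ring
      rw [e]
      refine (intervalIntegral.abs_integral_le_integral_abs hs).trans ?_
      apply int_bound m Q a s hs D hD _ ((Vv_cont m hx).sub (Vv_cont m hy)).abs
      intro t ht
      have h1 := (CV_lip m t (x t) (y t)).2
      have h2 := hxy t ht
      have h3 : 2 * (1 + m ^ 2 * t ^ 2) ^ 2 ≤ ell m Q a t := by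
        unfold ell
        have : 0 ≤ 2 * ((1 + m ^ 2 * t ^ 2) * (m + m * t ^ 2 / 4) + (1 / 2 + Q / a ^ 2))
          + (m + m * t ^ 2 / 4) := by positivity
        linarith
      calc _ ≤ _ := h1
        _ ≤ ell m Q a t * (D * exp (Kk m Q a t)) :=
          mul_le_mul h3 h2 (abs_nonneg _) (le_trans (by positivity) h3)
        _ = _ := by ring
    have hgx := gg_cont m Q ha hx
    have hgy := gg_cont m Q ha hy
    rw [Av_sub n _ _ hgx hgy]
    have hd : Continuous fun s => gg m Q a x s - gg m Q a y s := hgx.sub hgy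
    refine (Av_bound n _ (fun s => |gg m Q a x s - gg m Q a y s|) hd hd.abs r hr
      (fun s _ _ => le_rfl)).trans ?_
    apply int_bound m Q a r hr (D / 2) (by linarith) _ hd.abs
    intro s hs
    have h1 := (CV_lip m s (x s) (y s)).1
    have h2 := hxy s hs
    have h3 := hU s hs
    have h4 := hh_lip hQ ha (Uu_ge m a x hs) (Uu_ge m a y hs)
    have c1 := Cc_pos m s (y s)
    have c2 := Cc_le m s (y s)
    have c3 := hh_nonneg hQ ha (Uu_ge m a x hs)
    have c4 := hh_le hQ ha hm (Uu_le a hx hm0.le hs)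
    have e : gg m Q a x s - gg m Q a y s
        = (Cc m s (x s) - Cc m s (y s)) * hh Q a (Uu m a x s)
          + Cc m s (y s) * (hh Q a (Uu m a x s) - hh Q a (Uu m a y s)) := by
      unfold gg; ring
    set E := exp (Kk m Q a s)
    have hE : 0 < E := exp_pos _
    have b1 : |(Cc m s (x s) - Cc m s (y s)) * hh Q a (Uu m a x s)|
        ≤ (1 + m ^ 2 * s ^ 2) * (D * E) * (m + m * s ^ 2 / 4) := by
      rw [abs_mul, abs_of_nonneg c3]
      apply mul_le_mul _ c4 c3 (by positivity)
      exact h1.trans (mul_le_mul_of_nonneg_left h2 (by positivity))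
    have b2 : |Cc m s (y s) * (hh Q a (Uu m a x s) - hh Q a (Uu m a y s))|
        ≤ (1 / 2 + Q / a ^ 2) * (D * E) := by
      rw [abs_mul, abs_of_pos c1]
      calc _ ≤ 1 * |hh Q a (Uu m a x s) - hh Q a (Uu m a y s)| :=
            mul_le_mul_of_nonneg_right c2 (abs_nonneg _)
        _ ≤ (1 / 2 + Q / a ^ 2) * |Uu m a x s - Uu m a y s| := by rw [one_mul]; exact h4
        _ ≤ _ := mul_le_mul_of_nonneg_left h3 (by positivity)
    rw [e]
    refine (abs_add_le _ _).trans ((add_le_add b1 b2).trans ?_)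
    have h5 : 2 * ((1 + m ^ 2 * s ^ 2) * (m + m * s ^ 2 / 4) + (1 / 2 + Q / a ^ 2))
        ≤ ell m Q a s := by
      unfold ell
      have : 0 ≤ 2 * (1 + m ^ 2 * s ^ 2) ^ 2 + (m + m * s ^ 2 / 4) := by positivity
      linarith
    have h6 := mul_le_mul_of_nonneg_right h5 (show 0 ≤ D / 2 * E by positivity)
    calc _ = 2 * ((1 + m ^ 2 * s ^ 2) * (m + m * s ^ 2 / 4) + (1 / 2 + Q / a ^ 2)) * (D / 2 * E) := by
          ring
      _ ≤ _ := h6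
      _ = _ := by ring

end SE
namespace SE

lemma fence {f f' : ℝ → ℝ} {b c : ℝ} (hb : 0 < b) (hf : ContinuousOn f (Set.Ici 0))
    (h' : ∀ x > (0:ℝ), HasDerivAt f (f' x) x) (h0 : f 0 < c)
    (bd : ∀ x > (0:ℝ), x ≤ b → f x = c → f' x < 0) : f b ≤ c := by
  have h1 : ∀ᶠ x in nhdsWithin (0:ℝ) (Set.Ioi 0), f x < c := by
    have : Tendsto f (nhdsWithin 0 (Set.Ici 0)) (nhds (f 0)) := hf 0 Set.self_mem_Ici
    exact (this.eventually_lt_const h0).filter_mono (nhdsWithin_mono _ Set.Ioi_subset_Ici_self)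
  have h2 : ∀ᶠ x in nhdsWithin (0:ℝ) (Set.Ioi 0), x ∈ Set.Ioo 0 b := Ioo_mem_nhdsGT hb
  obtain ⟨e, he1, he2⟩ := (h1.and h2).exists
  have := image_le_of_deriv_right_lt_deriv_boundary (f := f) (f' := f') (a := e) (b := b)
    (B := fun _ => c) (B' := fun _ => 0)
    (hf.mono fun x hx => le_trans he2.1.le hx.1)
    (fun x hx => (h' x (lt_of_lt_of_le he2.1 hx.1)).hasDerivWithinAt) he1.le
    (fun x => hasDerivAt_const x c)
    (fun x hx hxc => bd x (lt_of_lt_of_le he2.1 hx.1) hx.2.le hxc)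
  exact this ⟨he2.2.le, le_rfl⟩

lemma W_mono {m s r : ℝ} (hm : 0 ≤ m) (hs : 0 ≤ s) (hsr : s ≤ r) : W m s ≤ W m r := by
  have hr := hs.trans hsr
  have h1 := W_sq m s
  have h2 := W_sq m r
  apply le_of_sq_le_sq _ (W_nonneg hm hr)
  have : 1 / (1 + m ^ 2 * r ^ 2) ≤ 1 / (1 + m ^ 2 * s ^ 2) := by
    apply one_div_le_one_div_of_le (base_pos m s)
    gcongr
  linarith

lemma exists_profile (n : ℕ) (hn : 1 ≤ n) (Q a m : ℝ) (hQ : 0 < Q) (ha : 0 < a)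
    (hm : m = a / 2 + Q / a) :
    ∃ u v : ℝ → ℝ, Continuous u ∧ Continuous v ∧ u 0 = a ∧ v 0 = 0 ∧
      (∀ r ≥ (0:ℝ), a ≤ u r) ∧ (∀ r ≥ (0:ℝ), 0 ≤ v r) ∧ (∀ r ≥ (0:ℝ), v r ≤ m * r) ∧
      (∀ r, HasDerivAt u (v r) r) ∧
      (∀ r > (0:ℝ), HasDerivAt v ((1 + v r ^ 2) * (u r / 2 + Q / u r - (n / r + r / 2) * v r)) r) := by
  have hm0 : 0 < m := by rw [hm]; positivity
  obtain ⟨x, hx, hfix⟩ := exists_trunc n Q a m hQ ha hm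
  have hx0 : x 0 = 0 := by rw [← hfix 0 le_rfl, Av_zero]
  have hgc := gg_cont m Q ha hx
  have hxpos : ∀ r ≥ (0:ℝ), 0 ≤ x r := by
    intro r hr
    rw [← hfix r hr]
    unfold Av
    refine mul_nonneg (inv_nonneg.2 (Phi_nonneg n hr)) (intervalIntegral.integral_nonneg hr ?_)
    intro s hs
    exact mul_nonneg (Phi_nonneg n hs.1) (mul_nonneg (Cc_pos _ _ _).le
      (hh_nonneg hQ ha (Uu_ge m a x hs.1)))
  have hxd : ∀ r > (0:ℝ), HasDerivAt x (gg m Q a x r - (n / r + r / 2) * x r) r := by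
    intro r hr
    have h := Av_deriv n _ hgc hr
    rw [hfix r hr.le] at h
    apply h.congr_of_eventuallyEq
    filter_upwards [Ioi_mem_nhds hr] with s hs
    exact (hfix s (le_of_lt hs)).symm
  have hxW : ∀ r ≥ (0:ℝ), x r ≤ W m r := by
    intro r hr
    by_contra hcon
    push Not at hcon
    rcases hr.eq_or_lt with rfl | hr0
    · rw [hx0] at hcon
      exact absurd hcon (not_lt.2 (W_nonneg hm0.le le_rfl))
    obtain ⟨c, hc1, hc2⟩ := exists_between hcon
    refine absurd (fence (f := x) (c := c) hr0 hx.continuousOn hxd ?_ ?_) (not_le.2 hc2)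
    · rw [hx0]; exact lt_of_le_of_lt (W_nonneg hm0.le hr) hc1
    · intro s hs hsr hxs
      have hWs := W_mono hm0.le hs.le hsr
      have hWc : W m s < x s := by rw [hxs]; linarith
      have ht : tau m s (x s) = W m s := by
        unfold tau
        rw [min_eq_right hWc.le, max_eq_right (W_nonneg hm0.le hs.le)]
      have hC : Cc m s (x s) = 1 / √(1 + m ^ 2 * s ^ 2) := by
        unfold Cc
        rw [ht, W_sq, Real.sqrt_div (by norm_num), Real.sqrt_one]
      have hCp := Cc_pos m s (x s)
      have hW : W m s = m * s * Cc m s (x s) := by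
        rw [hC]; unfold W; ring
      have c4 := hh_le hQ ha hm (Uu_le a hx hm0.le hs.le)
      have c5 : gg m Q a x s ≤ Cc m s (x s) * (m + m * s ^ 2 / 4) :=
        mul_le_mul_of_nonneg_left c4 hCp.le
      have hk : (1 / s + s / 2) ≤ (n / s + s / 2) := by
        have : (1:ℝ) ≤ n := by exact_mod_cast hn
        gcongr
      have hk0 : 0 < 1 / s + s / 2 := by positivity
      have c6 : (1 / s + s / 2) * W m s ≤ (n / s + s / 2) * x s :=
        mul_le_mul hk hWc.le (W_nonneg hm0.le hs.le) (hk0.le.trans hk)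
      have c7 : (1 / s + s / 2) * W m s = Cc m s (x s) * (m + m * s ^ 2 / 2) := by
        rw [hW]; field_simp
      have c8 : 0 < Cc m s (x s) * (m * s ^ 2 / 4) := by positivity
      nlinarith
  have hxt : ∀ r ≥ (0:ℝ), tau m r (x r) = x r := by
    intro r hr
    unfold tau
    rw [min_eq_left (hxW r hr), max_eq_right (hxpos r hr)]
  refine ⟨Uu m a x, fun r => Vv m r (x r), Uu_cont m a hx, Vv_cont m hx, by simp [Uu], ?_,
    fun r hr => Uu_ge m a x hr, fun r _ => Vv_nonneg _ _ _, fun r hr => Vv_le _ hm0.le hr,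
    fun r => Uu_deriv m a hx r, ?_⟩
  · change tau m 0 (x 0) / Cc m 0 (x 0) = 0
    rw [hxt 0 le_rfl, hx0, zero_div]
  · intro r hr
    have hev : (fun r => Vv m r (x r)) =ᶠ[nhds r] fun r => x r / √(1 - x r ^ 2) := by
      filter_upwards [Ioi_mem_nhds hr] with s hs
      simp only [Vv, Cc, hxt s (le_of_lt hs)]
    have hC : 0 < √(1 - x r ^ 2) := by
      have := Cc_pos m r (x r)
      rwa [Cc, hxt r hr.le] at this
    have hC2 : √(1 - x r ^ 2) ^ 2 = 1 - x r ^ 2 := Real.sq_sqrt (Real.sqrt_pos.1 hC).le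
    have hd := hxd r hr
    have hsq := ((hd.pow 2).const_sub 1).sqrt (Real.sqrt_pos.1 hC).ne'
    have hq := hd.div hsq hC.ne'
    refine (hq.congr_of_eventuallyEq hev).congr_deriv ?_
    have hu := Uu_ge m a x hr.le
    have hu0 : 0 < Uu m a x r := by linarith
    simp only [gg, hh, Vv, Cc, hxt r hr.le, max_eq_left hu]
    simp only [Pi.pow_apply]
    generalize hH : Uu m a x r / 2 + Q / Uu m a x r = H
    generalize hk : (n:ℝ) / r + r / 2 = k
    set S := √(1 - x r ^ 2)
    have hx2 : x r ^ 2 = 1 - S ^ 2 := by linarith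
    rw [div_pow, hx2]
    field_simp
    simp only [Nat.cast_ofNat, Nat.add_one_sub_one, pow_one]
    have : x r ^ 3 = x r * (1 - S ^ 2) := by rw [← hx2]; ring
    grind

lemma deriv_nonpos_left {f : ℝ → ℝ} {f' x c : ℝ} (hc : c < x) (h : HasDerivAt f f' x)
    (hy : ∀ y ∈ Set.Ioo c x, f x ≤ f y) : f' ≤ 0 := by
  have h1 := (hasDerivWithinAt_iff_tendsto_slope' (s := Set.Iio x) (by simp)).1
    (h.hasDerivWithinAt (s := Set.Iio x))
  refine le_of_tendsto h1 ?_
  filter_upwards [Ioo_mem_nhdsLT hc] with y hy1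
  rw [slope_def_field]
  exact div_nonpos_of_nonneg_of_nonpos (by linarith [hy y hy1]) (by linarith [hy1.2])

lemma asymp (n : ℕ) (hn : 1 ≤ n) (Q a m : ℝ) (hQ : 0 < Q) (ha : 0 < a) (hm : 0 < m)
    (u v : ℝ → ℝ) (hu : Continuous u) (hv : Continuous v) (hu0 : u 0 = a)
    (hua : ∀ r ≥ (0:ℝ), a ≤ u r) (hv0 : ∀ r ≥ (0:ℝ), 0 ≤ v r) (hvm : ∀ r ≥ (0:ℝ), v r ≤ m * r)
    (hud : ∀ r, HasDerivAt u (v r) r)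
    (hvd : ∀ r > (0:ℝ), HasDerivAt v
      ((1 + v r ^ 2) * (u r / 2 + Q / u r - (n / r + r / 2) * v r)) r) :
    ∃ lam > (0:ℝ), Tendsto (fun r => u r / r) atTop (nhds lam) ∧ Tendsto v atTop (nhds lam) := by
  have hn0 : (1:ℝ) ≤ n := by exact_mod_cast hn
  have hup : ∀ r ≥ (0:ℝ), 0 < u r := fun r hr => lt_of_lt_of_le ha (hua r hr)
  have hvpos : ∀ r > (0:ℝ), 0 < v r := by
    intro r hr
    rcases (hv0 r hr.le).eq_or_lt with h | h
    · exfalso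
      have h1 := deriv_nonpos_left hr (hvd r hr) (by
        intro y hy
        rw [← h]; exact hv0 y hy.1.le)
      rw [← h] at h1
      have := hup r hr.le
      have : 0 < u r / 2 + Q / u r := by positivity
      nlinarith
    · exact h
  -- the boundedness of φ
  have hpc : Continuous fun r => u r - r * v r := by fun_prop
  have hpd : ∀ r > (0:ℝ), HasDerivAt (fun r => u r - r * v r)
      (-(r * ((1 + v r ^ 2) * ((u r - r * v r) / 2 + Q / u r - n * (v r / r))))) r := by
    intro r hr
    refine ((hud r).sub ((hasDerivAt_id r).mul (hvd r hr))).congr_deriv ?_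
    have := hup r hr.le
    simp only [id]
    field_simp
    ring
  obtain ⟨C, hC0, hC⟩ : ∃ C > (0:ℝ), ∀ r > (0:ℝ), |u r - r * v r| ≤ C := by
    refine ⟨a + 2 * n * m + 2 * Q / a + 1, by positivity, fun r hr => ?_⟩
    set C := a + 2 * n * m + 2 * Q / a + 1 with hCdef
    have hq : 2 * Q / a > 0 := by positivity
    have hq2 : 2 * Q / a = 2 * (Q / a) := by ring
    have hnm : 0 < n * m := by positivity
    have upper := fence (b := r) (c := C) hr hpc.continuousOn hpd (by simp only [hu0]; linarith) (by
      intro s hs _ he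
      rw [he]
      have h1 : v s / s ≤ m := by rw [div_le_iff₀ hs]; exact hvm s hs.le
      have h2 : 0 < Q / u s := div_pos hQ (hup s hs.le)
      have h3 : n * (v s / s) ≤ n * m := by gcongr
      have h4 : 0 < C / 2 + Q / u s - n * (v s / s) := by linarith
      have : 0 < s * ((1 + v s ^ 2) * (C / 2 + Q / u s - n * (v s / s))) := by positivity
      linarith)
    have lower := fence (b := r) (c := C) hr hpc.neg.continuousOn
      (fun s hs => (hpd s hs).neg) (by simp only [Pi.neg_apply, hu0]; linarith) (by
      intro s hs _ he
      have he' : u s - s * v s = - C := by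
        have : -(u s - s * v s) = C := he
        linarith
      rw [he']
      have h1 : Q / u s ≤ Q / a := div_le_div_of_nonneg_left hQ.le ha (hua s hs.le)
      have h3 : 0 ≤ n * (v s / s) := by
        have := hv0 s hs.le
        positivity
      have h4 : 0 < -(-C / 2 + Q / u s - n * (v s / s)) := by linarith
      have : 0 < s * ((1 + v s ^ 2) * -(-C / 2 + Q / u s - n * (v s / s))) := by positivity
      linarith)
    have lower' : -(u r - r * v r) ≤ C := lower
    exact abs_le.2 ⟨by linarith, upper⟩
  -- convergence of u / r
  have hψd : ∀ r ∈ Set.Ioi (1:ℝ), HasDerivAt (fun r => u r / r) (-(u r - r * v r) / r ^ 2) r := by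
    intro r hr
    have hr0 : (0:ℝ) < r := lt_trans one_pos hr
    refine ((hud r).div (hasDerivAt_id r) hr0.ne').congr_deriv ?_
    simp only [id]; ring
  have hint : MeasureTheory.IntegrableOn (fun r => -(u r - r * v r) / r ^ 2) (Set.Ioi (1:ℝ)) := by
    have h1 := (integrableOn_Ioi_rpow_of_lt (a := -2) (c := 1) (by norm_num) one_pos).const_mul C
    refine MeasureTheory.Integrable.mono' h1 ?_ ?_
    · apply ContinuousOn.aestronglyMeasurable _ measurableSet_Ioi
      apply ContinuousOn.div hpc.neg.continuousOn (by fun_prop)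
      intro r hr
      have hr0 : (0:ℝ) < r := lt_trans one_pos hr
      positivity
    · filter_upwards [MeasureTheory.ae_restrict_mem measurableSet_Ioi] with r hr
      have hr0 : (0:ℝ) < r := lt_trans one_pos hr
      rw [Real.norm_eq_abs, abs_div, abs_neg, abs_of_pos (pow_pos hr0 2), Real.rpow_neg hr0.le,
        div_eq_mul_inv]
      norm_cast
      gcongr
      exact hC r hr0
  have hlim := MeasureTheory.tendsto_limUnder_of_hasDerivAt_of_integrableOn_Ioi hψd hint
  set lam := limUnder atTop fun r => u r / r
  have hvlim : Tendsto v atTop (nhds lam) := by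
    have h0 : Tendsto (fun r => (u r - r * v r) / r) atTop (nhds 0) := by
      have h1 : Tendsto (fun r : ℝ => C / r) atTop (nhds 0) := tendsto_const_nhds.div_atTop tendsto_id
      apply squeeze_zero_norm' _ h1
      filter_upwards [eventually_gt_atTop 0] with r hr
      rw [Real.norm_eq_abs, abs_div, abs_of_pos hr]
      have := hC r hr
      gcongr
    have h2 := hlim.sub h0
    rw [sub_zero] at h2
    apply h2.congr'
    filter_upwards [eventually_gt_atTop 0] with r hr
    field_simp
    ring
  -- positivity of the limit
  obtain ⟨δ, hδ0, hδ⟩ : ∃ δ > (0:ℝ), ∀ r ≥ (1:ℝ), δ ≤ v r := by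
    have hv1 := hvpos 1 one_pos
    refine ⟨min (v 1 / 2) (a / (1 + 2 * n)), by positivity, ?_⟩
    set δ := min (v 1 / 2) (a / (1 + 2 * n)) with hδ
    have hδ0 : 0 < δ := by positivity
    have hδ1 : δ ≤ v 1 / 2 := min_le_left _ _
    have hδ2 : δ * (1 + 2 * n) ≤ a := by
      rw [← le_div_iff₀ (by positivity)]; exact min_le_right _ _
    intro R hR
    by_contra hcon
    push Not at hcon
    have hcomp : IsCompact (Set.Icc 1 R ∩ {r | v r ≤ δ}) :=
      isCompact_Icc.inter_right (isClosed_le hv continuous_const)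
    obtain ⟨r, ⟨hr1, hr2⟩, hr3⟩ := hcomp.exists_isLeast ⟨R, ⟨hR, le_rfl⟩, hcon.le⟩
    have hr2' : v r ≤ δ := hr2
    have hr : 1 < r := by
      rcases hr1.1.eq_or_lt with h | h
      · rw [← h] at hr2'; linarith
      · exact h
    have hr0 : 0 < r := by linarith
    have hbefore : ∀ s ∈ Set.Ioo 1 r, δ < v s := by
      intro s hs
      by_contra h
      push Not at h
      have := hr3 ⟨⟨hs.1.le, hs.2.le.trans hr1.2⟩, h⟩
      linarith [hs.2]
    have hneg := deriv_nonpos_left hr (hvd r hr0) (fun y hy => hr2'.trans (hbefore y hy).le)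
    have hgrow := (convex_Icc 1 r).mul_sub_le_image_sub_of_le_deriv (f := u) (C := δ)
      hu.continuousOn (fun s _ => (hud s).differentiableAt.differentiableWithinAt) (by
        intro s hs
        rw [interior_Icc] at hs
        rw [(hud s).deriv]
        exact (hbefore s hs).le) 1 ⟨le_rfl, hr.le⟩ r ⟨hr.le, le_rfl⟩ hr.le
    have hu1 := hua 1 zero_le_one
    have h1 : 0 < Q / u r := div_pos hQ (hup r hr0.le)
    have h2 : (n / r + r / 2) * v r ≤ (n + r / 2) * δ := by
      have : (n:ℝ) / r ≤ n := div_le_self (by positivity) hr.le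
      have := hvpos r hr0
      gcongr
    have h3 : 0 < u r / 2 + Q / u r - (n / r + r / 2) * v r := by nlinarith
    have : 0 < (1 + v r ^ 2) * (u r / 2 + Q / u r - (n / r + r / 2) * v r) := by positivity
    linarith
  refine ⟨lam, ?_, hlim, hvlim⟩
  refine lt_of_lt_of_le hδ0 (ge_of_tendsto hvlim ?_)
  filter_upwards [eventually_ge_atTop 1] with r hr
  exact hδ r hr

end SE

/-- Existence of rotationally symmetric self-expanders: for every `a > 0` there is a
profile `u_a` with `u_a(0) = a`, `u_a′(0) = 0`, solving the self-expander ODE on `(0,∞)`,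
and asymptotic to some cone slope `λ(a) ∈ (0, ∞)` at infinity. -/
theorem self_expander_exists (p q : ℕ) (hp : 2 ≤ p) (hq : 2 ≤ q) (a : ℝ) (ha : 0 < a) :
    ∃ (u u' : ℝ → ℝ) (lam : ℝ),
      0 < lam ∧
      (∀ r ≥ (0 : ℝ), 0 < u r) ∧
      ContinuousOn u (Set.Ici 0) ∧
      ContDiffOn ℝ 2 u (Set.Ioi 0) ∧
      u 0 = a ∧
      ContinuousOn u' (Set.Ici 0) ∧
      u' 0 = 0 ∧
      (∀ r > (0 : ℝ), HasDerivAt u (u' r) r) ∧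
      (∀ r > (0 : ℝ),
          deriv u' r / (1 + (u' r) ^ 2)
            + (((p : ℝ) - 1) / r + r / 2) * u' r - u r / 2 - ((q : ℝ) - 1) / u r = 0) ∧
      Tendsto (fun r => u r / r) atTop (nhds lam) ∧
      Tendsto u' atTop (nhds lam) := by
  obtain ⟨n, rfl⟩ : ∃ n, p = n + 1 := ⟨p - 1, by omega⟩
  have hn : 1 ≤ n := by omega
  have hQ : (0:ℝ) < (q:ℝ) - 1 := by
    have : (2:ℝ) ≤ q := by exact_mod_cast hq
    linarith
  obtain ⟨u, v, hu, hv, hu0, hv0, hua, hvn, hvm, hud, hvd⟩ :=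
    SE.exists_profile n hn ((q:ℝ) - 1) a _ hQ ha rfl
  obtain ⟨lam, hlam, h1, h2⟩ := SE.asymp n hn ((q:ℝ) - 1) a _ hQ ha (by positivity) u v hu hv hu0
    hua hvn hvm hud hvd
  have hup : ∀ r ≥ (0:ℝ), 0 < u r := fun r hr => lt_of_lt_of_le ha (hua r hr)
  have hdu : deriv u = v := funext fun r => (hud r).deriv
  refine ⟨u, v, lam, hlam, hup, hu.continuousOn, ?_, hu0, hv.continuousOn, hv0,
    fun r _ => hud r, ?_, h1, h2⟩
  · rw [show (2 : WithTop ℕ∞) = 1 + 1 by norm_num, contDiffOn_succ_iff_deriv_of_isOpen isOpen_Ioi]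
    refine ⟨fun r _ => (hud r).differentiableAt.differentiableWithinAt, by simp, ?_⟩
    rw [hdu, show (1 : WithTop ℕ∞) = 0 + 1 by norm_num,
      contDiffOn_succ_iff_deriv_of_isOpen isOpen_Ioi]
    refine ⟨fun r hr => (hvd r hr).differentiableAt.differentiableWithinAt, by simp, ?_⟩
    rw [contDiffOn_zero]
    have hc : ContinuousOn (fun r => (1 + v r ^ 2) *
        (u r / 2 + ((q:ℝ) - 1) / u r - (n / r + r / 2) * v r)) (Set.Ioi 0) := by
      have e1 : ContinuousOn (fun r => ((q:ℝ) - 1) / u r) (Set.Ioi 0) :=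
        continuousOn_const.div hu.continuousOn fun r hr => (hup r (le_of_lt hr)).ne'
      have e2 : ContinuousOn (fun r : ℝ => (n:ℝ) / r) (Set.Ioi 0) :=
        continuousOn_const.div continuousOn_id fun r hr => (ne_of_gt hr)
      have e3 := hu.continuousOn (s := Set.Ioi 0)
      have e4 := hv.continuousOn (s := Set.Ioi 0)
      fun_prop
    exact hc.congr fun r hr => (hvd r hr).deriv
  · intro r hr
    rw [(hvd r hr).deriv]
    have : 1 + v r ^ 2 ≠ 0 := by positivity
    rw [mul_div_cancel_left₀ _ this]
    push_cast
    ring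
end
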